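/- arXiv:math/0512408 — 8 statements merged into one kernel-verified Lean document; each statement's English description precedes it below -/
import Mathlib

section
/- Let (W, S) be a Coxeter system of finite rank. If G₁ and G₂ are parabolic subgroups of W, then the intersection G₁ ∩ G₂ is a parabolic subgroup of W; that is, there exist x ∈ W and K ⊆ S such that G₁ ∩ G₂ = x W_K x⁻¹. -/
/-!
The proof rests on the reflection cocycle `η : W × W → ℤ/2`, for which `η (xy) t = η x t + η y (x⁻¹ t x)`
and `η sᵢ t = 1` iff `t = sᵢ`. It is obtained by letting `W` act on `W × ℤ/2` through
`sᵢ · (t, ε) = (sᵢ t sᵢ, ε + [t = sᵢ])`; the braid relations hold because the reflections met along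
the relator `(sᵢ sⱼ)^m` are the `sⱼ (sᵢ sⱼ)^n` with `n < 2m`, each of which is met an even number of
times. A word in letters of `I` representing `w` can be shortened within `I` to a word for `t w`
whenever `η w t ≠ 0` (exchange), so for a reflection `t` one has `ℓ (t w) < ℓ w` iff `η w t ≠ 0`,
and elements of `W_I` have reduced words in `I`.

Up to conjugation the intersection is `W_I ∩ d W_J d⁻¹` with `d` of minimal length in its double
coset `W_I d W_J`. This is the special subgroup on `K = {i ∈ I | sᵢ d = d sⱼ for some j ∈ J}`:
if `u d = d v` with `u ∈ W_I`, `v ∈ W_J`, and `sᵢ` is a left descent of `u`, then the cocycle identity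
and the minimality of `d` force `d⁻¹ sᵢ d` to be some `sⱼ` with `j ∈ J`, so `i ∈ K`, and induction
on the length of `u` applies to `sᵢ u`.
-/

namespace ParabolicInter

open CoxeterSystem

variable {B : Type*} {W : Type*} [Group W] {M : CoxeterMatrix B} (cs : CoxeterSystem M W)

/-! ### The reflection cocycle -/

open Classical in
/-- The permutation `(t, ε) ↦ (sᵢ t sᵢ, ε + [t = sᵢ])` of `W × ℤ/2`. Here `t` ranges over all of `W`,
not only over reflections. -/
noncomputable def sigma (i : B) : Equiv.Perm (W × ZMod 2) :=
  Function.Involutive.toPerm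
    (fun p => (cs.simple i * p.1 * cs.simple i, p.2 + if p.1 = cs.simple i then 1 else 0)) (by
      rintro ⟨t, e⟩
      have h : cs.simple i * t * cs.simple i = cs.simple i ↔ t = cs.simple i := by
        constructor
        · intro h
          have h' : cs.simple i * (cs.simple i * t * cs.simple i) * cs.simple i
              = cs.simple i * cs.simple i * cs.simple i := by rw [h]
          simpa [mul_assoc] using h'
        · rintro rfl
          simp
      by_cases ht : t = cs.simple i
      · subst ht
        simp [add_assoc, CharTwo.add_self_eq_zero]
      · simp only [h, ht, if_false, add_zero]
        simp [mul_assoc])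

open Classical in
lemma sigma_apply (i : B) (t : W) (e : ZMod 2) :
    sigma cs i (t, e) =
      (cs.simple i * t * cs.simple i, e + if t = cs.simple i then 1 else 0) := rfl

lemma simple_mul_pow (i j : B) (k : ℕ) :
    (cs.simple i * cs.simple j) ^ k * cs.simple j * (cs.simple i * cs.simple j) ^ k
      = cs.simple j := by
  induction k with
  | zero => simp
  | succ k ih =>
    calc _ = cs.simple i * cs.simple j * ((cs.simple i * cs.simple j) ^ k * cs.simple j *
          (cs.simple i * cs.simple j) ^ k) * (cs.simple i * cs.simple j) := by
            conv_lhs => lhs; rw [pow_succ']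
            rw [pow_succ]
            simp only [mul_assoc]
      _ = _ := by rw [ih]; simp [mul_assoc]

/-- Conjugation of `sⱼ` by the rotation `r = sᵢ sⱼ`: `r⁻ᵏ sⱼ = sⱼ rᵏ`. -/
lemma conj_eq_iff (i j : B) (k : ℕ) (t x : W) :
    (cs.simple i * cs.simple j) ^ k * t * ((cs.simple i * cs.simple j) ^ k)⁻¹ = cs.simple j * x ↔
      t = cs.simple j * (cs.simple i * cs.simple j) ^ k * x * (cs.simple i * cs.simple j) ^ k := by
  have h := simple_mul_pow cs i j k
  generalize (cs.simple i * cs.simple j) ^ k = r at *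
  have h1 : r⁻¹ * cs.simple j = cs.simple j * r := by
    rw [inv_mul_eq_iff_eq_mul, ← mul_assoc, h]
  rw [← h1, mul_inv_eq_iff_eq_mul, ← eq_inv_mul_iff_mul_eq]
  simp only [mul_assoc]

open Classical in
lemma sigma_mul_pow_apply (i j : B) (k : ℕ) (t : W) (e : ZMod 2) :
    ((sigma cs i * sigma cs j) ^ k) (t, e) =
      ((cs.simple i * cs.simple j) ^ k * t * ((cs.simple i * cs.simple j) ^ k)⁻¹,
        e + ∑ n ∈ Finset.range (2 * k),
          if t = cs.simple j * (cs.simple i * cs.simple j) ^ n then 1 else 0) := by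
  induction k with
  | zero => simp
  | succ k ih =>
    have h1 := conj_eq_iff cs i j k t 1
    have h2 := conj_eq_iff cs i j k t (cs.simple i * cs.simple j)
    rw [mul_one, mul_one, mul_assoc (cs.simple j), ← pow_add, ← two_mul] at h1
    rw [mul_assoc (cs.simple j), ← pow_succ, mul_assoc (cs.simple j), ← pow_add,
      show k + 1 + k = 2 * k + 1 by ring] at h2
    have h3 : ∀ x : W, cs.simple j * x * cs.simple j = cs.simple i ↔
        x = cs.simple j * (cs.simple i * cs.simple j) := by
      intro x
      rw [← mul_left_inj (cs.simple j), ← mul_right_inj (cs.simple j)]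
      simp [mul_assoc]
    rw [pow_succ', Equiv.Perm.mul_apply, ih, Equiv.Perm.mul_apply, sigma_apply, sigma_apply,
      show 2 * (k + 1) = 2 * k + 1 + 1 by ring, Finset.sum_range_succ, Finset.sum_range_succ]
    refine Prod.ext ?_ ?_
    · simp [pow_succ', mul_assoc]
    · simp only [h3, h1, h2, add_assoc]

lemma sigma_isLiftable : M.IsLiftable (sigma cs) := by
  classical
  intro i j
  ext1 ⟨t, e⟩
  rw [sigma_mul_pow_apply, cs.simple_mul_simple_pow, two_mul, Finset.sum_range_add]
  simp [pow_add, CharTwo.add_self_eq_zero]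

/-- The action of `W` on `W × ℤ/2` extending `sigma`. -/
noncomputable def phi : W →* Equiv.Perm (W × ZMod 2) :=
  cs.lift ⟨sigma cs, sigma_isLiftable cs⟩

/-- The reflection cocycle: for a reflection `t`, `eta cs w t` is the parity of the number of times
`t` occurs in the left inversion sequence of any word for `w`. The inverse in `w⁻¹` converts the right
inversions seen by the action into left ones. -/
noncomputable def eta (w t : W) : ZMod 2 := (phi cs w⁻¹ (t, 0)).2

lemma phi_simple (i : B) : phi cs (cs.simple i) = sigma cs i :=
  cs.lift_apply_simple (sigma_isLiftable cs) i

lemma phi_apply (w t : W) (e : ZMod 2) :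
    phi cs w (t, e) = (w * t * w⁻¹, e + eta cs w⁻¹ t) := by
  have key : ∀ t e, phi cs w (t, e) = (w * t * w⁻¹, e + (phi cs w (t, 0)).2) := by
    induction w using cs.simple_induction_left with
    | one => simp
    | mul_simple_left w i ih =>
      intro t e
      rw [map_mul, phi_simple, Equiv.Perm.mul_apply, Equiv.Perm.mul_apply, ih t e, ih t 0,
        sigma_apply, sigma_apply]
      simp [mul_assoc, add_assoc]
  rw [key, eta, inv_inv]

lemma eta_mul (x y t : W) : eta cs (x * y) t = eta cs x t + eta cs y (x⁻¹ * t * x) := by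
  rw [eta, mul_inv_rev, map_mul, Equiv.Perm.mul_apply, phi_apply cs x⁻¹, phi_apply]
  simp

lemma eta_one (t : W) : eta cs 1 t = 0 := by simp [eta]

open Classical in
lemma eta_simple (i : B) (t : W) :
    eta cs (cs.simple i) t = if t = cs.simple i then 1 else 0 := by
  rw [eta, cs.inv_simple, phi_simple, sigma_apply, zero_add]

lemma eta_self {t : W} (ht : cs.IsReflection t) : eta cs t t = 1 := by
  obtain ⟨x, i, rfl⟩ := ht
  have h := eta_mul cs x x⁻¹ (x * cs.simple i * x⁻¹)
  rw [mul_inv_cancel, eta_one] at h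
  rw [eta_mul, eta_mul]
  simp only [mul_assoc, mul_inv_rev, inv_mul_cancel_left, inv_mul_cancel, mul_one,
    inv_simple, simple_mul_simple_cancel_left] at h ⊢
  rw [eta_simple, if_pos rfl, add_right_comm, ← h, zero_add]

/-! ### Exchange and reduced words in special subgroups -/

/-- Exchange: a letter can be deleted from a word for `w` to give a word for `t w`. -/
lemma exists_delete (ω : List B) (t : W) (h : eta cs (cs.wordProd ω) t ≠ 0) :
    ∃ ω' : List B, ω' ⊆ ω ∧ ω'.length + 1 = ω.length ∧ cs.wordProd ω' = t * cs.wordProd ω := by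
  classical
  induction ω generalizing t with
  | nil => simp [eta_one] at h
  | cons i ω ih =>
    rw [cs.wordProd_cons, eta_mul, eta_simple] at h
    by_cases ht : t = cs.simple i
    · exact ⟨ω, by simp, rfl, by simp [ht, wordProd_cons]⟩
    · rw [if_neg ht, zero_add] at h
      obtain ⟨ω', h1, h2, h3⟩ := ih _ h
      refine ⟨i :: ω', List.cons_subset_cons i h1, by simpa using h2, ?_⟩
      rw [wordProd_cons, h3, wordProd_cons]
      simp [mul_assoc]

lemma length_lt_of_eta {w t : W} (h : eta cs w t ≠ 0) : cs.length (t * w) < cs.length w := by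
  obtain ⟨ω, hω, rfl⟩ := cs.exists_isReduced w
  obtain ⟨ω', -, h2, h3⟩ := exists_delete cs ω t h
  have := cs.length_wordProd_le ω'
  rw [h3] at this
  rw [hω.eq]
  omega

lemma eta_ne_zero {w t : W} (ht : cs.IsReflection t) (h : cs.length (t * w) < cs.length w) :
    eta cs w t ≠ 0 := by
  intro h0
  have h1 : eta cs (t * w) t ≠ 0 := by
    rw [eta_mul, eta_self cs ht]
    simp [h0]
  have := length_lt_of_eta cs h1
  rw [← mul_assoc, ht.mul_self, one_mul] at this
  omega

/-- The special subgroup `W_I`. -/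
abbrev spec (I : Set B) : Subgroup W := Subgroup.closure (cs.simple '' I)

lemma simple_mem {I : Set B} {i : B} (hi : i ∈ I) : cs.simple i ∈ spec cs I :=
  Subgroup.subset_closure ⟨i, hi, rfl⟩

lemma wordProd_mem {I : Set B} (ω : List B) (h : ∀ i ∈ ω, i ∈ I) : cs.wordProd ω ∈ spec cs I := by
  induction ω with
  | nil => simp [one_mem]
  | cons i ω ih =>
    rw [wordProd_cons]
    exact mul_mem (simple_mem cs (h i (by simp))) (ih fun j hj => h j (by simp [hj]))

lemma exists_reduced_word {I : Set B} {u : W} (hu : u ∈ spec cs I) :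
    ∃ ω : List B, (∀ i ∈ ω, i ∈ I) ∧ cs.IsReduced ω ∧ u = cs.wordProd ω := by
  have step : ∀ i ∈ I, ∀ y : W,
      (∃ ω : List B, (∀ i ∈ ω, i ∈ I) ∧ cs.IsReduced ω ∧ y = cs.wordProd ω) →
      ∃ ω : List B, (∀ i ∈ ω, i ∈ I) ∧ cs.IsReduced ω ∧ cs.simple i * y = cs.wordProd ω := by
    rintro i hi y ⟨ω, h1, h2, rfl⟩
    rcases cs.length_simple_mul (cs.wordProd ω) i with h | h
    · refine ⟨i :: ω, by simpa [hi] using h1, ?_, (cs.wordProd_cons i ω).symm⟩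
      rw [CoxeterSystem.IsReduced, wordProd_cons, h, h2.eq, List.length_cons]
    · obtain ⟨ω', g1, g2, g3⟩ := exists_delete cs ω _
        (eta_ne_zero cs (cs.isReflection_simple i) (by omega : cs.length (cs.simple i * _) < _))
      refine ⟨ω', fun j hj => h1 j (g1 hj), ?_, g3.symm⟩
      rw [CoxeterSystem.IsReduced, g3]
      have := h2.eq
      omega
  induction hu using Subgroup.closure_induction_left with
  | one => exact ⟨[], by simp, by simp [CoxeterSystem.IsReduced], by simp⟩
  | mul_left x hx y hy ih =>
    obtain ⟨i, hi, rfl⟩ := hx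
    exact step i hi y ih
  | inv_mul_cancel x hx y hy ih =>
    obtain ⟨i, hi, rfl⟩ := hx
    rw [inv_simple]
    exact step i hi y ih

lemma exists_descent {I : Set B} {u : W} (hu : u ∈ spec cs I) (h1 : u ≠ 1) :
    ∃ i ∈ I, cs.length (cs.simple i * u) < cs.length u := by
  obtain ⟨ω, hI, hr, rfl⟩ := exists_reduced_word cs hu
  cases ω with
  | nil => simp at h1
  | cons i ω =>
    refine ⟨i, hI i (by simp), ?_⟩
    rw [hr.eq, wordProd_cons, simple_mul_simple_cancel_left]
    exact Nat.lt_succ_of_le (cs.length_wordProd_le ω)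

lemma mem_of_eta {J : Set B} {v t : W} (hv : v ∈ spec cs J) (h : eta cs v t ≠ 0) :
    t ∈ spec cs J := by
  obtain ⟨ω, hJ, -, rfl⟩ := exists_reduced_word cs hv
  obtain ⟨ω', g1, -, g3⟩ := exists_delete cs ω t h
  have := wordProd_mem cs ω' fun j hj => hJ j (g1 hj)
  rw [g3] at this
  exact (Subgroup.mul_mem_cancel_right _ hv).1 this

/-! ### Minimal double coset representatives -/

/-- If `d` is minimal in `W_I d W_J` and `t` moves `d` inside this double coset, then `t` is not a left
inversion of `d`. -/
lemma eta_min {I J : Set B} {d : W}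
    (hd : ∀ a ∈ spec cs I, ∀ b ∈ spec cs J, cs.length d ≤ cs.length (a * d * b))
    {t a b : W} (ha : a ∈ spec cs I) (hb : b ∈ spec cs J) (h : t * d = a * d * b) :
    eta cs d t = 0 := by
  by_contra h0
  have h1 := length_lt_of_eta cs h0
  have h2 := hd a ha b hb
  rw [h] at h1
  omega

lemma exists_simple_conj {I J : Set B} {d : W}
    (hd : ∀ a ∈ spec cs I, ∀ b ∈ spec cs J, cs.length d ≤ cs.length (a * d * b))
    {u v : W} (hu : u ∈ spec cs I) (hv : v ∈ spec cs J) (huv : u * d = d * v)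
    {i : B} (hi : i ∈ I) (hiu : cs.length (cs.simple i * u) < cs.length u) :
    ∃ j ∈ J, cs.simple i * d = d * cs.simple j := by
  classical
  have hs := simple_mem cs hi
  have h1 : eta cs (u * d) (cs.simple i) ≠ 0 := by
    rw [eta_mul, eta_min cs hd (mul_mem (mul_mem (inv_mem hu) hs) hu) (one_mem _) (mul_one _).symm,
      add_zero]
    exact eta_ne_zero cs (cs.isReflection_simple i) hiu
  have h2 : d⁻¹ * cs.simple i * d ∈ spec cs J := by
    rw [huv, eta_mul, eta_min cs hd hs (one_mem _) (mul_one _).symm, zero_add] at h1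
    exact mem_of_eta cs hv h1
  have h3 : d⁻¹ * cs.simple i * d ≠ 1 := by
    intro h
    have h' : cs.simple i = 1 := by
      have : d * (d⁻¹ * cs.simple i * d) * d⁻¹ = d * 1 * d⁻¹ := by rw [h]
      simpa [mul_assoc] using this
    have := cs.length_simple i
    rw [h', length_one] at this
    omega
  obtain ⟨j, hj, hlt⟩ := exists_descent cs h2 h3
  have hsj := simple_mem cs hj
  have h4 := eta_ne_zero cs (cs.isReflection_simple j) hlt
  -- The value of `η` at `sᵢ d = d t`, with `t = d⁻¹ sᵢ d`, on the reflection `d sⱼ d⁻¹`, in two ways.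
  have e1 := eta_mul cs d (d⁻¹ * cs.simple i * d) (d * cs.simple j * d⁻¹)
  have e2 := eta_mul cs (cs.simple i) d (d * cs.simple j * d⁻¹)
  rw [eta_min cs hd (one_mem _) hsj (by simp [mul_assoc]), zero_add,
    show d⁻¹ * (d * cs.simple j * d⁻¹) * d = cs.simple j by simp [mul_assoc],
    show d * (d⁻¹ * cs.simple i * d) = cs.simple i * d by simp [mul_assoc]] at e1
  rw [eta_min cs hd hs (mul_mem hsj h2) (by simp [mul_assoc]), add_zero, e1, eta_simple] at e2
  rw [e2] at h4
  have h5 : d * cs.simple j * d⁻¹ = cs.simple i := by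
    by_contra h
    simp [h] at h4
  exact ⟨j, hj, by rw [← h5]; simp [mul_assoc]⟩

lemma mem_spec_of_min {I J : Set B} {d : W}
    (hd : ∀ a ∈ spec cs I, ∀ b ∈ spec cs J, cs.length d ≤ cs.length (a * d * b)) (n : ℕ) :
    ∀ u ∈ spec cs I, ∀ v ∈ spec cs J, u * d = d * v → cs.length u ≤ n →
      u ∈ spec cs {i | i ∈ I ∧ ∃ j ∈ J, cs.simple i * d = d * cs.simple j} := by
  induction n with
  | zero =>
    intro u _ v _ _ hn
    rw [cs.length_eq_zero_iff.1 (Nat.le_zero.1 hn)]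
    exact one_mem _
  | succ n ih =>
    intro u hu v hv huv hn
    by_cases h1 : u = 1
    · rw [h1]
      exact one_mem _
    obtain ⟨i, hi, hlt⟩ := exists_descent cs hu h1
    obtain ⟨j, hj, hij⟩ := exists_simple_conj cs hd hu hv huv hi hlt
    refine (Subgroup.mul_mem_cancel_left _ (simple_mem cs (And.intro hi ⟨j, hj, hij⟩))).1
      (ih _ (mul_mem (simple_mem cs hi) hu) (cs.simple j * v)
        (mul_mem (simple_mem cs hj) hv) ?_ (by omega))
    rw [mul_assoc, huv, ← mul_assoc, hij, mul_assoc]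

lemma exists_min (I J : Set B) (w : W) :
    ∃ a ∈ spec cs I, ∃ b ∈ spec cs J, ∀ a' ∈ spec cs I, ∀ b' ∈ spec cs J,
      cs.length (a * w * b) ≤ cs.length (a' * (a * w * b) * b') := by
  obtain ⟨⟨⟨a, ha⟩, ⟨b, hb⟩⟩, h⟩ : ∃ p : spec cs I × spec cs J, ∀ q : spec cs I × spec cs J,
      cs.length (p.1 * w * p.2) ≤ cs.length (q.1 * w * q.2) :=
    ⟨_, fun q => Function.argmin_le (fun p : spec cs I × spec cs J => cs.length (p.1 * w * p.2)) q⟩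
  refine ⟨a, ha, b, hb, fun a' ha' b' hb' => ?_⟩
  have := h ⟨⟨a' * a, mul_mem ha' ha⟩, ⟨b * b', mul_mem hb hb'⟩⟩
  simpa [mul_assoc] using this

end ParabolicInter


/-- **Theorem 1 (Tits; Solomon).** Let `(W, S)` be a Coxeter system of finite rank.
The intersection of two parabolic subgroups `G₁, G₂` of `W` is a parabolic subgroup,
i.e. there exist `x ∈ W` and `K ⊆ S` with `G₁ ⊓ G₂ = x W_K x⁻¹`. -/
theorem inter_parabolic_is_parabolic
    {B : Type*} [Finite B] {W : Type*} [Group W] {M : CoxeterMatrix B}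
    (cs : CoxeterSystem M W) (G₁ G₂ : Subgroup W)
    (h₁ : ∃ (w : W) (I : Set B),
      G₁ = (Subgroup.closure (cs.simple '' I)).map (MulAut.conj w).toMonoidHom)
    (h₂ : ∃ (w : W) (J : Set B),
      G₂ = (Subgroup.closure (cs.simple '' J)).map (MulAut.conj w).toMonoidHom) :
    ∃ (x : W) (K : Set B),
      G₁ ⊓ G₂ = (Subgroup.closure (cs.simple '' K)).map (MulAut.conj x).toMonoidHom := by
  obtain ⟨w₁, I, rfl⟩ := h₁
  obtain ⟨w₂, J, rfl⟩ := h₂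
  obtain ⟨a, ha, b, hb, hd⟩ := ParabolicInter.exists_min cs I J (w₁⁻¹ * w₂)
  -- With `d = a w₁⁻¹ w₂ b`, conjugation by `w₁ a⁻¹` carries `W_I ∩ d W_J d⁻¹` to the intersection.
  obtain ⟨d, hdef⟩ : ∃ d, d = a * (w₁⁻¹ * w₂) * b := ⟨_, rfl⟩
  rw [← hdef] at hd
  have hw : w₂ = w₁ * a⁻¹ * d * b⁻¹ := by
    rw [hdef]
    simp [mul_assoc]
  refine ⟨w₁ * a⁻¹, {i | i ∈ I ∧ ∃ j ∈ J, cs.simple i * d = d * cs.simple j}, ?_⟩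
  ext g
  simp only [Subgroup.mem_inf, Subgroup.mem_map, MulEquiv.toMonoidHom_eq_coe,
    MonoidHom.coe_coe, MulAut.conj_apply]
  constructor
  · rintro ⟨⟨u, hu, rfl⟩, v, hv, hg⟩
    refine ⟨a * u * a⁻¹, ParabolicInter.mem_spec_of_min cs hd _ _
      (mul_mem (mul_mem ha hu) (inv_mem ha)) (b⁻¹ * v * b)
      (mul_mem (mul_mem (inv_mem hb) hv) hb) ?_ le_rfl, by simp [mul_assoc]⟩
    have hu' : u = w₁⁻¹ * (w₂ * v * w₂⁻¹) * w₁ := by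
      rw [hg]
      simp [mul_assoc]
    rw [hu', hw]
    simp [mul_assoc]
  · rintro ⟨x, hx, rfl⟩
    have hxI : x ∈ Subgroup.closure (cs.simple '' I) :=
      Subgroup.closure_mono (Set.image_mono fun i hi => hi.1) hx
    have hxJ : d⁻¹ * x * d ∈ Subgroup.closure (cs.simple '' J) := by
      induction hx using Subgroup.closure_induction with
      | mem x hx =>
        obtain ⟨i, ⟨-, j, hj, hij⟩, rfl⟩ := hx
        rw [mul_assoc, hij, inv_mul_cancel_left]
        exact Subgroup.subset_closure ⟨j, hj, rfl⟩
      | one => simp [one_mem]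
      | mul x y hx hy ihx ihy =>
        have h := mul_mem (ihx (Subgroup.closure_mono (Set.image_mono fun i hi => hi.1) hx))
          (ihy (Subgroup.closure_mono (Set.image_mono fun i hi => hi.1) hy))
        simpa [mul_assoc] using h
      | inv x hx ihx =>
        have h := inv_mem (ihx (Subgroup.closure_mono (Set.image_mono fun i hi => hi.1) hx))
        simpa [mul_assoc] using h
    refine ⟨⟨a⁻¹ * x * a, mul_mem (mul_mem (inv_mem ha) hxI) ha, by simp [mul_assoc]⟩,
      b * (d⁻¹ * x * d) * b⁻¹, mul_mem (mul_mem hb hxJ) (inv_mem hb), ?_⟩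
    rw [hw]
    simp [mul_assoc]
end

section
/- Let (W, S) be a Coxeter system of finite rank. If W_I = w W_J w⁻¹ for some w ∈ W and subsets I, J ⊆ S, then |I| = |J|. -/
/-!
The proof uses the geometric representation `ρ` of `W` on the real vector space `V` with basis
`(e i)` indexed by `B`: the generator `s i` acts by `v ↦ v - f i v • e i`, where
`f i (e j) = -2 cos (π / M i j)`. The Coxeter relations hold for these reflections by the formula
for powers of a product of two reflections in terms of Chebyshev polynomials
(`reflection_mul_reflection_pow_eq_one`).

To a subgroup `H` of `W` attach the subspace `D H` of `V` spanned by all `ρ g v - v` with `g ∈ H`.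
Then `D (w H w⁻¹) = ρ w (D H)`, so conjugate subgroups give subspaces of equal dimension
(`movedSubspace_conj`). Since `f i (e i) = 2 ≠ 0`, the subspace `D W_I` is spanned by the basis
vectors `e i` with `i ∈ I` (`movedSubspace_closure`), hence has dimension `|I|`. Neither
faithfulness of `ρ` nor the exchange condition is needed.
-/

open Module Real

/-- Two reflections whose pairings satisfy `f y = g x = -2 cos (π / m)` have a product of order
dividing `m`: it is a rotation by `2π / m`. -/
lemma reflection_mul_reflection_pow_eq_one {V : Type*} [AddCommGroup V] [Module ℝ V]
    {x y : V} {f g : Dual ℝ V} (hf : f x = 2) (hg : g y = 2) (m : ℕ) (hm : 2 ≤ m)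
    (hfy : f y = -2 * cos (π / m)) (hgx : g x = -2 * cos (π / m)) :
    (reflection hf * reflection hg) ^ m = 1 := by
  obtain rfl | hm3 := hm.eq_or_lt
  · -- For `m = 2` the pairings vanish; here `sin (2π / m) = 0`, so this case is done by hand.
    have hfy : f y = 0 := by simpa using hfy
    have hgx : g x = 0 := by simpa using hgx
    ext z
    simp only [pow_two, LinearEquiv.mul_apply, reflection_apply, map_sub, map_smul, hf, hg, hfy,
      hgx, LinearEquiv.coe_one, id_eq]
    module
  have hm0 : (m : ℝ) ≠ 0 := by positivity
  set θ : ℝ := 2 * π / m with hθ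
  have hmθ : m * θ = 2 * π := by rw [hθ]; field_simp
  have hsin : sin θ ≠ 0 := by
    have h3 : (3 : ℝ) ≤ m := by exact_mod_cast hm3
    refine (sin_pos_of_pos_of_lt_pi (by positivity) ?_).ne'
    rw [hθ, div_lt_iff₀ (by positivity)]
    nlinarith [pi_pos]
  have ht : 2 * cos θ = f y * g x - 2 := by
    rw [hfy, hgx, hθ, mul_div_assoc, cos_two_mul]
    ring
  have hS (n : ℤ) := Polynomial.Chebyshev.S_two_mul_real_cos θ n
  ext z
  rw [reflection_mul_reflection_pow_apply hf hg m z (2 * cos θ) ht]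
  obtain ⟨k, rfl | rfl⟩ := Nat.even_or_odd' m
  · have h1 : (((2 * k : ℕ) : ℤ) - 2) / 2 = (k : ℤ) - 1 := by lia
    have h2 : (((2 * k : ℕ) : ℤ) - 1) / 2 = (k : ℤ) - 1 := by lia
    have h0 : (Polynomial.Chebyshev.S ℝ ((k : ℤ) - 1)).eval (2 * cos θ) = 0 := by
      refine (mul_eq_zero.mp ?_).resolve_right hsin
      have hk : (k : ℝ) * θ = π := by push_cast at hmθ; linarith
      rw [hS]
      push_cast
      rw [sub_add_cancel, hk, sin_pi]
    rw [h1, h2, h0]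
    simp
  · have h1 : (((2 * k + 1 : ℕ) : ℤ) - 1) / 2 = (k : ℤ) := by lia
    have h2 : (((2 * k + 1 : ℕ) : ℤ) - 2) / 2 = (k : ℤ) - 1 := by lia
    have h3 : (((2 * k + 1 : ℕ) : ℤ) - 3) / 2 = (k : ℤ) - 1 := by lia
    have h4 : (((2 * k + 1 : ℕ) : ℤ)) / 2 = (k : ℤ) := by lia
    have h0 : (Polynomial.Chebyshev.S ℝ (k : ℤ)).eval (2 * cos θ) +
        (Polynomial.Chebyshev.S ℝ ((k : ℤ) - 1)).eval (2 * cos θ) = 0 := by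
      refine (mul_eq_zero.mp ?_).resolve_right hsin
      have hk : ((k : ℝ) + 1) * θ = 2 * π - k * θ := by push_cast at hmθ; linarith
      rw [add_mul, hS, hS]
      push_cast
      rw [sub_add_cancel, hk, sin_two_pi_sub, neg_add_cancel]
    rw [h1, h2, h3, h4, h0]
    simp

/-- The linear form `f i` on `⊕ ℝ e j` with `f i (e j) = -2 cos (π / M i j)`. The entry
`M i j = 0`, which encodes the order `∞`, gives the value `-2`, since `π / 0 = 0`. -/
noncomputable def CoxeterMatrix.geomForm {B : Type*} (M : CoxeterMatrix B) (i : B) :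
    Dual ℝ (B →₀ ℝ) :=
  Finsupp.linearCombination ℝ fun j ↦ -2 * cos (π / M i j)

lemma CoxeterMatrix.geomForm_single {B : Type*} (M : CoxeterMatrix B) (i j : B) :
    M.geomForm i (Finsupp.single j 1) = -2 * cos (π / M i j) := by
  simp [geomForm]

lemma CoxeterMatrix.geomForm_self {B : Type*} (M : CoxeterMatrix B) (i : B) :
    M.geomForm i (Finsupp.single i 1) = 2 := by
  simp [geomForm_single]

lemma CoxeterMatrix.isLiftable_reflection {B : Type*} (M : CoxeterMatrix B) :
    M.IsLiftable fun i ↦ reflection (M.geomForm_self i) := by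
  intro i j
  obtain rfl | hij := eq_or_ne i j
  · rw [M.diagonal, pow_one]
    ext1 z
    exact involutive_reflection (M.geomForm_self i) z
  · obtain h0 | h0 := Nat.eq_zero_or_pos (M i j)
    · rw [h0, pow_zero]
    · have h1 := M.off_diagonal i j hij
      refine reflection_mul_reflection_pow_eq_one _ _ _ ?_ (M.geomForm_single i j) ?_
      · change M i j ≠ 1 at h1
        lia
      · rw [M.geomForm_single, M.symmetric]

/-- The geometric representation of a Coxeter group. -/
noncomputable def CoxeterSystem.geomRep {B W : Type*} [Group W] {M : CoxeterMatrix B}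
    (cs : CoxeterSystem M W) : W →* ((B →₀ ℝ) ≃ₗ[ℝ] (B →₀ ℝ)) :=
  cs.lift ⟨_, M.isLiftable_reflection⟩

lemma CoxeterSystem.geomRep_simple {B W : Type*} [Group W] {M : CoxeterMatrix B}
    (cs : CoxeterSystem M W) (i : B) (v : B →₀ ℝ) :
    cs.geomRep (cs.simple i) v = v - M.geomForm i v • Finsupp.single i 1 := by
  rw [geomRep, cs.lift_apply_simple, reflection_apply]

/-- The span of all displacements `ρ g v - v` with `g ∈ H`; equivalently, the smallest subspace
such that `H` acts trivially on the quotient by it. -/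
def movedSubspace {G V : Type*} [Group G] [AddCommGroup V] [Module ℝ V]
    (ρ : G →* (V ≃ₗ[ℝ] V)) (H : Subgroup G) : Submodule ℝ V :=
  Submodule.span ℝ {u | ∃ g ∈ H, ∃ v, u = ρ g v - v}

lemma movedSubspace_conj {G V : Type*} [Group G] [AddCommGroup V] [Module ℝ V]
    (ρ : G →* (V ≃ₗ[ℝ] V)) (H : Subgroup G) (w : G) :
    movedSubspace ρ (H.map (MulAut.conj w).toMonoidHom) =
      (movedSubspace ρ H).map (ρ w).toLinearMap := by
  rw [movedSubspace, movedSubspace, Submodule.map_span]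
  congr 1
  ext u
  constructor
  · rintro ⟨_, ⟨g, hg, rfl⟩, v, rfl⟩
    refine ⟨_, ⟨g, hg, (ρ w)⁻¹ v, rfl⟩, ?_⟩
    simp
  · rintro ⟨_, ⟨g, hg, v, rfl⟩, rfl⟩
    refine ⟨_, ⟨g, hg, rfl⟩, ρ w v, ?_⟩
    simp

lemma movedSubspace_closure {B W : Type*} [Group W] {M : CoxeterMatrix B}
    (cs : CoxeterSystem M W) (I : Set B) :
    movedSubspace cs.geomRep (Subgroup.closure (cs.simple '' I)) =
      Submodule.span ℝ ((fun i ↦ Finsupp.single i (1 : ℝ)) '' I) := by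
  apply le_antisymm
  · rw [movedSubspace, Submodule.span_le]
    rintro _ ⟨g, hg, v, rfl⟩
    induction hg using Subgroup.closure_induction generalizing v with
    | mem g hg =>
      obtain ⟨i, hi, rfl⟩ := hg
      rw [cs.geomRep_simple, sub_sub_cancel_left]
      exact Submodule.neg_mem _ (Submodule.smul_mem _ _ (Submodule.subset_span ⟨i, hi, rfl⟩))
    | one => simp
    | mul a b _ _ ha hb =>
      have := Submodule.add_mem _ (ha (cs.geomRep b v)) (hb v)
      rwa [sub_add_sub_cancel, ← LinearEquiv.mul_apply, ← map_mul] at this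
    | inv a _ ha =>
      have := Submodule.neg_mem _ (ha (cs.geomRep a⁻¹ v))
      rwa [← LinearEquiv.mul_apply, ← map_mul, mul_inv_cancel, map_one, LinearEquiv.coe_one,
        id_eq, neg_sub] at this
  · rw [Submodule.span_le]
    rintro _ ⟨i, hi, rfl⟩
    -- The displacement of `e i` under `s i` is `-2 • e i`.
    have h : cs.geomRep (cs.simple i) (Finsupp.single i 1) - Finsupp.single i 1 ∈
        movedSubspace cs.geomRep (Subgroup.closure (cs.simple '' I)) :=
      Submodule.subset_span ⟨_, Subgroup.subset_closure ⟨i, hi, rfl⟩, _, rfl⟩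
    rw [cs.geomRep_simple, M.geomForm_self, sub_sub_cancel_left] at h
    have h' := Submodule.smul_mem _ (-1 / 2 : ℝ) h
    rw [smul_neg, smul_smul, ← neg_smul] at h'
    norm_num at h'
    simpa using h'

lemma finrank_movedSubspace_closure {B W : Type*} [Group W] {M : CoxeterMatrix B}
    [Finite B] (cs : CoxeterSystem M W) (I : Set B) :
    finrank ℝ (movedSubspace cs.geomRep (Subgroup.closure (cs.simple '' I))) = I.ncard := by
  classical
  have := Fintype.ofFinite I
  have hli : LinearIndependent ℝ fun i : I ↦ Finsupp.single (i : B) (1 : ℝ) :=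
    (Finsupp.linearIndependent_single_one ℝ B).comp _ Subtype.val_injective
  rw [movedSubspace_closure, Set.image_eq_range, finrank_span_eq_card hli,
    ← Nat.card_eq_fintype_card, Nat.card_coe_set_eq]

/-- If two special subgroups `W_I` and `W_J` of a finite-rank Coxeter system are
conjugate, `W_I = w W_J w⁻¹`, then `|I| = |J|`. -/
theorem card_eq_of_special_subgroups_conjugate
    {B : Type*} [Finite B] {W : Type*} [Group W] {M : CoxeterMatrix B}
    (cs : CoxeterSystem M W) (I J : Set B) (w : W)
    (h : Subgroup.closure (cs.simple '' I) =
      (Subgroup.closure (cs.simple '' J)).map (MulAut.conj w).toMonoidHom) :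
    I.ncard = J.ncard := by
  rw [← finrank_movedSubspace_closure cs I, ← finrank_movedSubspace_closure cs J, h,
    movedSubspace_conj]
  exact LinearEquiv.finrank_map_eq (cs.geomRep w) _
end

section
/- Let (W, S) be a Coxeter system of finite rank. Suppose I, J ⊆ S and w ∈ W satisfy W_I ⊄ w W_J w⁻¹ and w W_J w⁻¹ ⊄ W_I. Then the intersection W_I ∩ w W_J w⁻¹ equals x W_K x⁻¹ for some x ∈ W and K ⊆ S with |K| < min{|I|, |J|}. -/
/-!
The proof is Kilmoyer's description of an intersection of two parabolic subgroups. Choose `d` of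
minimal length in the double coset `W_I w W_J`, say `d = a w b` with `a ∈ W_I` and `b ∈ W_J`. Then
`W_I ∩ w W_J w⁻¹` is the conjugate by `a⁻¹` of `W_I ∩ d W_J d⁻¹`, and the latter is generated by
the simple reflections in `I` that have the form `d s_j d⁻¹` with `j ∈ J`. These involve a proper
subset of `I` and a proper subset of `J`, since otherwise one of `W_I` and `w W_J w⁻¹` would
contain the other.

To see that `u = d v d⁻¹` (`u ∈ W_I`, `v ∈ W_J`) is a product of such reflections, induct on the
length of `u`. A left descent `i ∈ I` of `u` is a left descent of `u d = d v`, because lengths add.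
By the exchange condition `s_i` deletes a letter of `d`, which minimality of `d` forbids, or a
letter of `v`; in the latter case `d⁻¹ s_i d ∈ W_J`, and additivity of lengths makes this element
a simple reflection of `J`.

The exchange condition comes from the action of `W` on `W × ℤ/2` in which `s_i` sends `(t, e)` to
`(s_i t s_i, e + [t = s_i])`: the second coordinate records the parity of the multiplicity of `t`
in the inversion sequence of a word, which therefore depends only on the element of `W` that
the word represents.
-/

namespace CoxeterSystem

variable {B : Type*} {W : Type*} [Group W] {M : CoxeterMatrix B} (cs : CoxeterSystem M W)

/-! ### The exchange condition -/

open Classical in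
/-- The involution `(t, e) ↦ (s_i t s_i, e + [t = s_i])` of `W × ℤ/2`. It is defined for all
`t : W`, although only reflections `t` matter. -/
noncomputable def signPerm (i : B) : Equiv.Perm (W × ZMod 2) :=
  Function.Involutive.toPerm
    (fun p => (cs.simple i * p.1 * cs.simple i, p.2 + if p.1 = cs.simple i then 1 else 0)) (by
      rintro ⟨t, e⟩
      have h : (cs.simple i * t * cs.simple i = cs.simple i) ↔ t = cs.simple i := by
        constructor
        · intro h
          have h2 : cs.simple i * t = 1 := by simpa using h
          rw [← cs.inv_simple i]
          exact eq_inv_of_mul_eq_one_right h2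
        · rintro rfl
          simp
      have h2 : (1 + 1 : ZMod 2) = 0 := by decide
      ext
      · simp [mul_assoc]
      · simp only [h]
        split_ifs <;> simp [add_assoc, h2])

open Classical in
theorem signPerm_prod_apply (ω : List B) (t : W) (e : ZMod 2) :
    (ω.map cs.signPerm).prod (t, e) =
      (cs.wordProd ω * t * (cs.wordProd ω)⁻¹, e + ((cs.rightInvSeq ω).count t : ℕ)) := by
  induction ω with
  | nil => simp
  | cons i ω ih =>
    rw [List.map_cons, List.prod_cons, Equiv.Perm.mul_apply, ih]
    have h : (cs.wordProd ω * t * (cs.wordProd ω)⁻¹ = cs.simple i) ↔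
        ((cs.wordProd ω)⁻¹ * cs.simple i * cs.wordProd ω = t) := by
      constructor
      · intro h
        rw [← h]; group
      · rintro rfl
        group
    ext
    · simp [signPerm, cs.wordProd_cons, mul_assoc]
    · change e + ((cs.rightInvSeq ω).count t : ℕ) +
        (if cs.wordProd ω * t * (cs.wordProd ω)⁻¹ = cs.simple i then 1 else 0) = _
      simp only [h, rightInvSeq, List.count_cons, beq_iff_eq]
      split_ifs <;> simp [add_assoc]

theorem signPerm_mul_pow (i j : B) (m : ℕ) :
    (cs.signPerm i * cs.signPerm j) ^ m =
      ((alternatingWord j i (2 * m)).reverse.map cs.signPerm).prod := by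
  induction m with
  | zero => simp [alternatingWord]
  | succ m ih =>
    rw [show 2 * (m + 1) = 2 * m + 1 + 1 by ring, alternatingWord_succ, alternatingWord_succ,
      pow_succ', ih]
    simp [mul_assoc]

/-- The braid relations hold for the permutations `signPerm i`, since the inversion sequence of
`(s_i s_j) ^ m`, with `m = M i j`, is periodic with period `m` and has length `2 * m`. -/
theorem signPerm_isLiftable : M.IsLiftable cs.signPerm := by
  classical
  intro i j
  rw [signPerm_mul_pow]
  set m := M i j with hm
  have hperiod : (cs.leftInvSeq (alternatingWord j i (2 * m))).drop m =
      (cs.leftInvSeq (alternatingWord j i (2 * m))).take m := by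
    apply List.ext_getElem
    · simp; omega
    · intro k h1 h2
      simp only [List.length_take, length_leftInvSeq, length_alternatingWord] at h2
      rw [List.getElem_drop, List.getElem_take,
        getElem_leftInvSeq_alternatingWord cs j i m (m + k) (by omega),
        getElem_leftInvSeq_alternatingWord cs j i m k (by omega),
        prod_alternatingWord_eq_mul_pow, prod_alternatingWord_eq_mul_pow]
      have e1 : (2 * (m + k) + 1) / 2 = m + k := by omega
      have e2 : (2 * k + 1) / 2 = k := by omega
      have o1 : ¬ Even (2 * (m + k) + 1) := by simp
      have o2 : ¬ Even (2 * k + 1) := by simp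
      rw [e1, e2, if_neg o1, if_neg o2, pow_add, hm]
      simp
  have hcount (t : W) :
      (((cs.rightInvSeq (alternatingWord j i (2 * m)).reverse).count t : ℕ) : ZMod 2) = 0 := by
    rw [rightInvSeq_reverse, List.count_reverse,
      ← List.take_append_drop m (cs.leftInvSeq (alternatingWord j i (2 * m))), hperiod,
      List.count_append, Nat.cast_add]
    exact CharTwo.add_self_eq_zero _
  have hprod : cs.wordProd (alternatingWord j i (2 * m)).reverse = 1 := by
    rw [wordProd_reverse, prod_alternatingWord_eq_mul_pow]
    simp [hm]
  ext ⟨t, e⟩ <;> rw [signPerm_prod_apply, hcount, hprod] <;> simp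

open Classical in
theorem count_rightInvSeq_congr {ω ω' : List B} (h : cs.wordProd ω = cs.wordProd ω') (t : W) :
    (((cs.rightInvSeq ω).count t : ℕ) : ZMod 2) = ((cs.rightInvSeq ω').count t : ℕ) := by
  have key (ω : List B) : cs.lift ⟨cs.signPerm, cs.signPerm_isLiftable⟩ (cs.wordProd ω) =
      (ω.map cs.signPerm).prod := by
    rw [wordProd, map_list_prod, List.map_map]
    congr 1
    apply List.map_congr_left
    intro i _
    exact cs.lift_apply_simple cs.signPerm_isLiftable i
  have h2 := key ω
  rw [h, key ω'] at h2
  have h3 := congrArg (fun f => (f (t, 0)).2) h2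
  simp only [signPerm_prod_apply, zero_add] at h3
  exact h3.symm

theorem exchange_right {ω : List B} {i : B} (h : cs.IsRightDescent (cs.wordProd ω) i) :
    ∃ k < ω.length, cs.wordProd ω * cs.simple i = cs.wordProd (ω.eraseIdx k) := by
  classical
  obtain ⟨ω₀, hred, hω₀⟩ := cs.exists_isReduced (cs.wordProd ω * cs.simple i)
  -- `s_i` is not an inversion of the shorter element `π ω * s_i`.
  have hnot : cs.simple i ∉ cs.rightInvSeq ω₀ := by
    intro hmem
    have := (cs.isRightInversion_of_mem_rightInvSeq hred hmem).2
    rw [← hω₀, simple_mul_simple_cancel_right] at this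
    exact lt_asymm this h
  have hw : cs.wordProd ω = cs.wordProd (ω₀.concat i) := by
    rw [wordProd_concat, ← hω₀, simple_mul_simple_cancel_right]
  have hc := cs.count_rightInvSeq_congr hw (cs.simple i)
  have hmap : ((cs.rightInvSeq ω₀).map (MulAut.conj (cs.simple i))).count (cs.simple i) = 0 := by
    rw [List.count_eq_zero]
    intro hmem
    obtain ⟨t, ht, hti⟩ := List.mem_map.1 hmem
    have : t = cs.simple i := by
      apply (MulAut.conj (cs.simple i)).injective
      rw [hti]; simp
    exact hnot (this ▸ ht)
  rw [rightInvSeq_concat, List.concat_eq_append, List.count_append, hmap] at hc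
  have hmem : cs.simple i ∈ cs.rightInvSeq ω := by
    by_contra hn
    rw [List.count_eq_zero.2 hn] at hc
    simp at hc
  obtain ⟨k, hk, hki⟩ := List.getElem_of_mem hmem
  refine ⟨k, by simpa using hk, ?_⟩
  rw [← wordProd_mul_getD_rightInvSeq, List.getD_eq_getElem _ _ hk, hki]

/-- The exchange condition on a product of two words: the deleted letter is in one of them. -/
theorem exchange_right_append {ω ω' : List B} {i : B}
    (h : cs.IsRightDescent (cs.wordProd ω * cs.wordProd ω') i) :
    (∃ k < ω.length, cs.wordProd ω * cs.wordProd ω' * cs.simple i =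
        cs.wordProd (ω.eraseIdx k) * cs.wordProd ω') ∨
    (∃ k < ω'.length, cs.wordProd ω' * cs.simple i = cs.wordProd (ω'.eraseIdx k)) := by
  rw [← wordProd_append] at h
  obtain ⟨k, hk, he⟩ := cs.exchange_right h
  rw [List.length_append] at hk
  by_cases hkω : k < ω.length
  · left
    refine ⟨k, hkω, ?_⟩
    rw [← wordProd_append, he, List.eraseIdx_append_of_lt_length hkω, wordProd_append]
  · right
    refine ⟨k - ω.length, by omega, ?_⟩
    rw [List.eraseIdx_append_of_length_le (by omega), wordProd_append, wordProd_append,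
      mul_assoc] at he
    exact mul_left_cancel he

/-! ### Special subgroups and minimal coset representatives -/

/-- The special subgroup `W_I`. -/
abbrev special (I : Set B) : Subgroup W := Subgroup.closure (cs.simple '' I)

theorem wordProd_mem_special {I : Set B} {ω : List B} (h : ∀ i ∈ ω, i ∈ I) :
    cs.wordProd ω ∈ cs.special I := by
  induction ω with
  | nil => simp
  | cons i ω ih =>
    rw [wordProd_cons]
    exact mul_mem (Subgroup.subset_closure ⟨i, h i (by simp), rfl⟩)
      (ih fun j hj => h j (by simp [hj]))

theorem exists_isReduced_of_mem_special {I : Set B} {u : W} (hu : u ∈ cs.special I) :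
    ∃ ω : List B, (∀ i ∈ ω, i ∈ I) ∧ cs.IsReduced ω ∧ u = cs.wordProd ω := by
  have step (u : W) (i : B) (hi : i ∈ I)
      (h : ∃ ω : List B, (∀ i ∈ ω, i ∈ I) ∧ cs.IsReduced ω ∧ u = cs.wordProd ω) :
      ∃ ω : List B, (∀ i ∈ ω, i ∈ I) ∧ cs.IsReduced ω ∧ u * cs.simple i = cs.wordProd ω := by
    obtain ⟨ω, hω, hred, rfl⟩ := h
    by_cases hd : cs.IsRightDescent (cs.wordProd ω) i
    · obtain ⟨k, hk, he⟩ := cs.exchange_right hd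
      refine ⟨ω.eraseIdx k, fun j hj => hω j (List.mem_of_mem_eraseIdx hj), ?_, he⟩
      have h1 := cs.isRightDescent_iff.1 hd
      rw [he, hred.eq] at h1
      have := List.length_eraseIdx_of_lt hk
      unfold IsReduced
      omega
    · refine ⟨ω.concat i, ?_, ?_, (cs.wordProd_concat i ω).symm⟩
      · intro j hj
        simp only [List.concat_eq_append, List.mem_append, List.mem_singleton] at hj
        rcases hj with hj | rfl
        exacts [hω j hj, hi]
      · have h1 := cs.not_isRightDescent_iff.1 hd
        rw [hred.eq] at h1
        unfold IsReduced
        rw [wordProd_concat, h1]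
        simp
  induction hu using Subgroup.closure_induction_right with
  | one => exact ⟨[], by simp, by simp [IsReduced], by simp⟩
  | mul_right x hx y hy ih =>
    obtain ⟨i, hi, rfl⟩ := hy
    exact step x i hi ih
  | mul_inv_cancel x hx y hy ih =>
    obtain ⟨i, hi, rfl⟩ := hy
    rw [inv_simple]
    exact step x i hi ih

theorem length_mul_of_minimal {J : Set B} {d : W}
    (hd : ∀ v ∈ cs.special J, cs.length d ≤ cs.length (d * v)) {v : W} (hv : v ∈ cs.special J) :
    cs.length (d * v) = cs.length d + cs.length v := by
  obtain ⟨ω, hω, hred, rfl⟩ := cs.exists_isReduced_of_mem_special hv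
  clear hv
  induction ω using List.reverseRecOn with
  | nil => simp
  | append_singleton ω i ih =>
    have hωJ : ∀ j ∈ ω, j ∈ J := fun j hj => hω j (by simp [hj])
    have hi : i ∈ J := hω i (by simp)
    have hredω : cs.IsReduced ω := by simpa using hred.take ω.length
    have ih := ih hωJ hredω
    have hlen := hred.eq
    rw [wordProd_append, wordProd_singleton, List.length_append, List.length_singleton] at hlen
    rw [wordProd_append, wordProd_singleton, hlen, ← mul_assoc]
    by_cases hdesc : cs.IsRightDescent (d * cs.wordProd ω) i
    · exfalso
      obtain ⟨δ, hδ, rfl⟩ := cs.exists_isReduced d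
      rcases cs.exchange_right_append hdesc with ⟨k, hk, he⟩ | ⟨k, hk, he⟩
      · have hmem : cs.wordProd ω * cs.simple i * (cs.wordProd ω)⁻¹ ∈ cs.special J :=
          mul_mem (mul_mem (cs.wordProd_mem_special hωJ) (Subgroup.subset_closure ⟨i, hi, rfl⟩))
            (inv_mem (cs.wordProd_mem_special hωJ))
        have h1 := hd _ hmem
        rw [← mul_assoc, ← mul_assoc, he, mul_inv_cancel_right, hδ.eq] at h1
        have h2 := cs.length_wordProd_le (δ.eraseIdx k)
        have := List.length_eraseIdx_of_lt hk
        omega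
      · rw [he] at hlen
        have h2 := cs.length_wordProd_le (ω.eraseIdx k)
        have := List.length_eraseIdx_of_lt hk
        omega
    · rw [cs.not_isRightDescent_iff.1 hdesc, ih, hredω.eq, add_assoc]

theorem exists_simple_eq_of_length_le_one {J : Set B} {t : W} (ht : t ∈ cs.special J)
    (h1 : t ≠ 1) (hl : cs.length t ≤ 1) : ∃ j ∈ J, t = cs.simple j := by
  obtain ⟨ω, hω, hred, rfl⟩ := cs.exists_isReduced_of_mem_special ht
  rw [hred.eq] at hl
  match ω, hω, h1, hl with
  | [], _, h1, _ => simp at h1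
  | [j], hω, _, _ => exact ⟨j, hω j (by simp), by simp⟩

/-- Kilmoyer's theorem: for `d` of minimal length in `W_I d W_J`, every element `d v d⁻¹` of
`W_I ∩ d W_J d⁻¹` is a product of simple reflections of `I` of the form `d s_j d⁻¹`, `j ∈ J`. The
assumption on `H` expresses that it contains all such reflections. -/
theorem mem_of_minimal {I J : Set B} {d : W}
    (hdI : ∀ u ∈ cs.special I, cs.length d ≤ cs.length (u * d))
    (hdJ : ∀ v ∈ cs.special J, cs.length d ≤ cs.length (d * v)) (H : Subgroup W)
    (hH : ∀ i ∈ I, ∀ j ∈ J, cs.simple i = d * cs.simple j * d⁻¹ → cs.simple i ∈ H)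
    {u v : W} (hu : u ∈ cs.special I) (hv : v ∈ cs.special J) (huv : u * d = d * v) :
    u ∈ H := by
  have addI {u : W} (hu : u ∈ cs.special I) :
      cs.length (u * d) = cs.length u + cs.length d := by
    have hinv : ∀ x ∈ cs.special I, cs.length d⁻¹ ≤ cs.length (d⁻¹ * x) := by
      intro x hx
      have := hdI x⁻¹ (inv_mem hx)
      rwa [← cs.length_inv (x⁻¹ * d), mul_inv_rev, inv_inv, ← cs.length_inv d] at this
    have := cs.length_mul_of_minimal hinv (inv_mem hu)
    rw [← mul_inv_rev, length_inv, length_inv, length_inv] at this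
    omega
  obtain ⟨ω, hω, hred, rfl⟩ := cs.exists_isReduced_of_mem_special hu
  clear hu
  induction ω generalizing v with
  | nil => simp
  | cons i ω ih =>
    have hωI : ∀ j ∈ ω, j ∈ I := fun j hj => hω j (by simp [hj])
    have hi : i ∈ I := hω i (by simp)
    have hsi : cs.simple i ∈ cs.special I := Subgroup.subset_closure ⟨i, hi, rfl⟩
    have hredω : cs.IsReduced ω := by simpa using hred.drop 1
    obtain ⟨β, hβ, hβred, rfl⟩ := cs.exists_isReduced_of_mem_special hv
    obtain ⟨δ, hδ, hdδ⟩ := cs.exists_isReduced d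
    -- `i` is a left descent of `d v`; the exchange is made on the inverse `v⁻¹ d⁻¹`.
    have hdesc : cs.IsRightDescent (cs.wordProd β.reverse * cs.wordProd δ.reverse) i := by
      rw [wordProd_reverse, wordProd_reverse, ← mul_inv_rev, isRightDescent_inv_iff, ← hdδ, ← huv]
      unfold IsLeftDescent
      rw [addI (cs.wordProd_mem_special hω), hred.eq, wordProd_cons, mul_assoc,
        simple_mul_simple_cancel_left, addI (cs.wordProd_mem_special hωI), hredω.eq]
      simp
    rcases cs.exchange_right_append hdesc with ⟨k, hk, he⟩ | ⟨k, hk, he⟩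
    · -- A letter of `v` is deleted, so `t = d⁻¹ s_i d` lies in `W_J`.
      set t := d⁻¹ * cs.simple i * d with ht
      have htJ : t ∈ cs.special J := by
        have h1 : t = (cs.wordProd β.reverse)⁻¹ * cs.wordProd (β.reverse.eraseIdx k) := by
          have h2 : cs.wordProd δ.reverse = d⁻¹ := by rw [wordProd_reverse, hdδ]
          rw [h2] at he
          rw [ht, eq_inv_mul_iff_mul_eq, ← mul_assoc, ← mul_assoc, he, inv_mul_cancel_right]
        rw [h1]
        refine mul_mem (inv_mem (cs.wordProd_mem_special ?_)) (cs.wordProd_mem_special ?_)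
        · intro j hj
          exact hβ j (List.mem_reverse.1 hj)
        · intro j hj
          exact hβ j (List.mem_reverse.1 (List.mem_of_mem_eraseIdx hj))
      have hdt : d * t = cs.simple i * d := by rw [ht]; group
      have htl : cs.length t ≤ 1 := by
        have h1 := cs.length_mul_of_minimal hdJ htJ
        have h2 := cs.length_mul_le (cs.simple i) d
        rw [cs.length_simple] at h2
        rw [hdt] at h1
        omega
      have ht1 : t ≠ 1 := by
        intro h
        rw [h, mul_one] at hdt
        have h1 : cs.simple i = 1 := by simpa using hdt
        have := cs.length_simple i
        rw [h1, cs.length_one] at this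
        omega
      obtain ⟨j, hj, htj⟩ := cs.exists_simple_eq_of_length_le_one htJ ht1 htl
      rw [wordProd_cons]
      refine mul_mem (hH i hi j hj ?_) (ih (v := t * cs.wordProd β) (mul_mem htJ hv) hωI hredω ?_)
      · rw [← htj, hdt, mul_inv_cancel_right]
      · rw [← mul_assoc, hdt, mul_assoc, ← huv, wordProd_cons, mul_assoc,
          simple_mul_simple_cancel_left]
    · -- A letter of `d` is deleted, so `s_i d` is shorter than `d`.
      exfalso
      have h1 := hdI _ hsi
      rw [wordProd_reverse, ← hdδ] at he
      have h2 := cs.length_wordProd_le (δ.reverse.eraseIdx k)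
      rw [← he, ← cs.length_inv, mul_inv_rev, inv_inv, inv_simple,
        List.length_eraseIdx_of_lt hk] at h2
      have h3 := hδ.eq
      rw [← hdδ] at h3
      rw [List.length_reverse] at hk h2
      omega

end CoxeterSystem

/-- **Lemma 3.** If neither of `W_I` and `w W_J w⁻¹` contains the other, then their
intersection is a parabolic subgroup `x W_K x⁻¹` with `|K| < min {|I|, |J|}`. -/
theorem inter_special_parabolic_rank_lt
    {B : Type*} [Finite B] {W : Type*} [Group W] {M : CoxeterMatrix B}
    (cs : CoxeterSystem M W) (I J : Set B) (w : W)
    (h₁ : ¬ Subgroup.closure (cs.simple '' I) ≤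
      (Subgroup.closure (cs.simple '' J)).map (MulAut.conj w).toMonoidHom)
    (h₂ : ¬ (Subgroup.closure (cs.simple '' J)).map (MulAut.conj w).toMonoidHom ≤
      Subgroup.closure (cs.simple '' I)) :
    ∃ (x : W) (K : Set B),
      Subgroup.closure (cs.simple '' I) ⊓
          (Subgroup.closure (cs.simple '' J)).map (MulAut.conj w).toMonoidHom =
        (Subgroup.closure (cs.simple '' K)).map (MulAut.conj x).toMonoidHom ∧
      K.ncard < min I.ncard J.ncard := by
  classical
  have memconj (H : Subgroup W) (x g : W) :
      g ∈ H.map (MulAut.conj x).toMonoidHom ↔ x⁻¹ * g * x ∈ H := by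
    rw [Subgroup.mem_map]
    constructor
    · rintro ⟨h, hh, rfl⟩
      simpa [mul_assoc] using hh
    · intro h
      exact ⟨_, h, by simp [mul_assoc]⟩
  obtain ⟨d, ⟨a, ha, b, hb, hd⟩, hmin⟩ : ∃ d : W,
      (∃ a ∈ cs.special I, ∃ b ∈ cs.special J, d = a * w * b) ∧
      ∀ a ∈ cs.special I, ∀ b ∈ cs.special J, cs.length d ≤ cs.length (a * w * b) := by
    let S : Set W := {d | ∃ a ∈ cs.special I, ∃ b ∈ cs.special J, d = a * w * b}
    have hS : S.Nonempty := ⟨w, 1, one_mem _, 1, one_mem _, by simp⟩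
    obtain ⟨d, hdS, hmin⟩ := exists_minimalFor_of_wellFoundedLT (· ∈ S) cs.length hS
    refine ⟨d, hdS, fun a ha b hb => ?_⟩
    rcases le_total (cs.length d) (cs.length (a * w * b)) with h | h
    · exact h
    · exact hmin (j := a * w * b) ⟨a, ha, b, hb, rfl⟩ h
  have hdI : ∀ u ∈ cs.special I, cs.length d ≤ cs.length (u * d) := by
    intro u hu
    have := hmin (u * a) (mul_mem hu ha) b hb
    simpa [hd, mul_assoc] using this
  have hdJ : ∀ v ∈ cs.special J, cs.length d ≤ cs.length (d * v) := by
    intro v hv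
    have := hmin a ha (b * v) (mul_mem hb hv)
    simpa [hd, mul_assoc] using this
  -- `w W_J w⁻¹` is the conjugate of `d W_J d⁻¹` by `a⁻¹ ∈ W_I`.
  have hconj (g : W) : w⁻¹ * g * w ∈ cs.special J ↔ d⁻¹ * (a * g * a⁻¹) * d ∈ cs.special J := by
    have e : d⁻¹ * (a * g * a⁻¹) * d = b⁻¹ * (w⁻¹ * g * w) * b := by rw [hd]; group
    rw [e, Subgroup.mul_mem_cancel_right _ hb, Subgroup.mul_mem_cancel_left _ (inv_mem hb)]
  have hconjI (g : W) : a * g * a⁻¹ ∈ cs.special I ↔ g ∈ cs.special I := by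
    rw [Subgroup.mul_mem_cancel_right _ (inv_mem ha), Subgroup.mul_mem_cancel_left _ ha]
  -- `K` picks, for each `j ∈ L`, one index `i ∈ I` with `s_i = d s_j d⁻¹`.
  let L : Set B := {j | j ∈ J ∧ ∃ i ∈ I, cs.simple i = d * cs.simple j * d⁻¹}
  have hLch (j : B) : ∃ i : B, j ∈ L → i ∈ I ∧ cs.simple i = d * cs.simple j * d⁻¹ := by
    by_cases hj : j ∈ L
    · obtain ⟨i, hi, h⟩ := hj.2
      exact ⟨i, fun _ => ⟨hi, h⟩⟩
    · exact ⟨j, fun h => absurd h hj⟩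
  choose f hf using hLch
  let K : Set B := f '' L
  have hKI : K ⊆ I := by
    rintro _ ⟨j, hj, rfl⟩
    exact (hf j hj).1
  have hKle : cs.special K ≤ cs.special I := Subgroup.closure_mono (Set.image_mono hKI)
  have hKJ : ∀ g ∈ cs.special K, d⁻¹ * g * d ∈ cs.special J := by
    have hle : cs.special K ≤ (cs.special J).map (MulAut.conj d).toMonoidHom := by
      rw [Subgroup.closure_le]
      rintro _ ⟨_, ⟨j, hj, rfl⟩, rfl⟩
      rw [SetLike.mem_coe, memconj, (hf j hj).2]
      have e : d⁻¹ * (d * cs.simple j * d⁻¹) * d = cs.simple j := by group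
      rw [e]
      exact Subgroup.subset_closure ⟨j, hj.1, rfl⟩
    intro g hg
    exact (memconj _ _ _).1 (hle hg)
  have hK (u : W) (hu : u ∈ cs.special I) (huJ : d⁻¹ * u * d ∈ cs.special J) :
      u ∈ cs.special K := by
    refine cs.mem_of_minimal hdI hdJ (cs.special K) ?_ hu huJ (by group)
    intro i hi j hj h
    have hjL : j ∈ L := ⟨hj, i, hi, h⟩
    rw [h, ← (hf j hjL).2]
    exact Subgroup.subset_closure ⟨f j, ⟨j, hjL, rfl⟩, rfl⟩
  refine ⟨a⁻¹, K, ?_, lt_min ?_ ?_⟩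
  · ext g
    rw [Subgroup.mem_inf, memconj, memconj, inv_inv]
    change g ∈ cs.special I ∧ w⁻¹ * g * w ∈ cs.special J ↔ a * g * a⁻¹ ∈ cs.special K
    rw [hconj, ← hconjI]
    exact ⟨fun h => hK _ h.1 h.2, fun h => ⟨hKle h, hKJ _ h⟩⟩
  · apply Set.ncard_lt_ncard _ (Set.toFinite I)
    refine lt_of_le_of_ne hKI fun hEq => h₁ fun g hg => ?_
    rw [memconj]
    refine (hconj g).2 (hKJ _ ?_)
    rw [hEq]
    exact (hconjI g).2 hg
  · refine lt_of_le_of_lt (Set.ncard_image_le (Set.toFinite L)) ?_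
    apply Set.ncard_lt_ncard _ (Set.toFinite J)
    refine lt_of_le_of_ne (fun j hj => hj.1) fun hEq => h₂ fun g hg => ?_
    have hle : cs.special J ≤ (cs.special I).map (MulAut.conj d⁻¹).toMonoidHom := by
      rw [Subgroup.closure_le]
      rintro _ ⟨j, hj, rfl⟩
      rw [← hEq] at hj
      rw [SetLike.mem_coe, memconj, inv_inv, ← (hf j hj).2]
      exact Subgroup.subset_closure ⟨f j, (hf j hj).1, rfl⟩
    rw [memconj] at hg
    have h := (memconj _ _ _).1 (hle ((hconj g).1 hg))
    have e : d⁻¹⁻¹ * (d⁻¹ * (a * g * a⁻¹) * d) * d⁻¹ = a * g * a⁻¹ := by group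
    rw [e] at h
    exact (hconjI g).1 h
end

section
/- Let (W, S) be a Coxeter system of finite rank and let x ∈ W and K, I ⊆ S. If x W_K x⁻¹ ⊆ W_I, then |K| ≤ |I|. -/
/-!
The proof uses the geometric representation `ρ` of `W` on the real vector space `V` with basis
`α_i`, `i ∈ B`, in which a simple reflection acts by `v ↦ v - f_i(v) α_i` with
`f_i(α_j) = -2 cos (π / M i j)`. Only the existence of `ρ` is needed, not its faithfulness.

Write `V_I` for the span of the `α_i` with `i ∈ I`. Every `w ∈ W_I` satisfies `w v - v ∈ V_I` for
all `v`. For `k ∈ K`, the element `x s_k x⁻¹` lies in `W_I` and sends `x α_k` to `-x α_k`; hence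
`-2 x α_k ∈ V_I`, so `x α_k ∈ V_I`. Thus `x` maps `V_K` injectively into `V_I`, and comparing
dimensions gives `|K| ≤ |I|`.

That `ρ` respects the braid relations is a statement about two reflections
(`reflection_mul_pow_eq_one`), which follows from Mathlib's formula for the powers of a product of
two reflections in terms of Chebyshev polynomials.
-/

open Polynomial.Chebyshev in
/-- Two reflections whose pairing is that of two mirrors at angle `π / m`, where `m ≥ 3`, have a
product of order dividing `m`. -/
theorem reflection_mul_pow_eq_one_of_three_le {V : Type*} [AddCommGroup V] [Module ℝ V]
    {x y : V} {f g : Module.Dual ℝ V} (hf : f x = 2) (hg : g y = 2) {m : ℕ} (hm : 3 ≤ m)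
    (h : f y * g x = 4 * Real.cos (Real.pi / m) ^ 2) :
    (Module.reflection hf * Module.reflection hg) ^ m = 1 := by
  have hm' : (3 : ℝ) ≤ m := by exact_mod_cast hm
  have hm0 : (m : ℝ) ≠ 0 := by linarith
  set θ : ℝ := 2 * (Real.pi / m) with hθ
  have ht : 2 * Real.cos θ = f y * g x - 2 := by
    rw [h, hθ, Real.cos_two_mul]; ring
  have hmθ : m * θ = 2 * Real.pi := by rw [hθ]; field_simp
  have hsin : Real.sin θ ≠ 0 := by
    apply ne_of_gt
    apply Real.sin_pos_of_pos_of_lt_pi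
    · have := Real.pi_pos
      positivity
    · have := Real.pi_pos
      nlinarith
  ext z
  rw [Module.reflection_mul_reflection_pow_apply hf hg m z _ ht]
  -- In each of the two coefficients, a factor vanishes: the common outer factor if `m` is even,
  -- the sum of two consecutive Chebyshev values if `m` is odd.
  rcases Nat.even_or_odd' m with ⟨k, rfl | rfl⟩
  · have hS : (S ℝ ((k : ℤ) - 1)).eval (2 * Real.cos θ) = 0 := by
      have := S_two_mul_real_cos θ ((k : ℤ) - 1)
      have hk : ((((k : ℤ) - 1 : ℤ) : ℝ) + 1) * θ = Real.pi := by
        push_cast at hmθ ⊢; linarith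
      rw [hk, Real.sin_pi] at this
      exact (mul_eq_zero.1 this).resolve_right hsin
    have e1 : (((2 * k : ℕ) : ℤ) - 2) / 2 = (k : ℤ) - 1 := by omega
    have e2 : (((2 * k : ℕ) : ℤ) - 1) / 2 = (k : ℤ) - 1 := by omega
    rw [e1, e2, hS]
    simp
  · have hS : (S ℝ (k : ℤ)).eval (2 * Real.cos θ)
        + (S ℝ ((k : ℤ) - 1)).eval (2 * Real.cos θ) = 0 := by
      have h1 := S_two_mul_real_cos θ (k : ℤ)
      have h2 := S_two_mul_real_cos θ ((k : ℤ) - 1)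
      have hk : (((k : ℤ) : ℝ) + 1) * θ
          = 2 * Real.pi - ((((k : ℤ) - 1 : ℤ) : ℝ) + 1) * θ := by
        push_cast at hmθ ⊢; linarith
      rw [hk, Real.sin_two_pi_sub] at h1
      have : ((S ℝ (k : ℤ)).eval (2 * Real.cos θ)
        + (S ℝ ((k : ℤ) - 1)).eval (2 * Real.cos θ)) * Real.sin θ = 0 := by
        rw [add_mul, h1, h2]; ring
      exact (mul_eq_zero.1 this).resolve_right hsin
    have e1 : (((2 * k + 1 : ℕ) : ℤ) - 2) / 2 = (k : ℤ) - 1 := by omega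
    have e2 : (((2 * k + 1 : ℕ) : ℤ) - 1) / 2 = (k : ℤ) := by omega
    have e3 : (((2 * k + 1 : ℕ) : ℤ) - 3) / 2 = (k : ℤ) - 1 := by omega
    have e4 : ((2 * k + 1 : ℕ) : ℤ) / 2 = (k : ℤ) := by omega
    rw [e1, e2, e3, e4, hS]
    simp

/-- Includes the degenerate cases: for `m = 0` there is nothing to prove, for `m = 1` the
reflections are assumed equal, and for `m = 2` the pairings vanish and the reflections commute. -/
theorem reflection_mul_pow_eq_one {V : Type*} [AddCommGroup V] [Module ℝ V]
    {x y : V} {f g : Module.Dual ℝ V} (hf : f x = 2) (hg : g y = 2) (m : ℕ)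
    (h1 : m = 1 → x = y ∧ f = g)
    (hfy : f y = -2 * Real.cos (Real.pi / m)) (hgx : g x = -2 * Real.cos (Real.pi / m)) :
    (Module.reflection hf * Module.reflection hg) ^ m = 1 := by
  obtain rfl | rfl | rfl | hm : m = 0 ∨ m = 1 ∨ m = 2 ∨ 3 ≤ m := by omega
  · simp
  · obtain ⟨rfl, rfl⟩ := h1 rfl
    ext z
    simpa using Module.involutive_reflection hf z
  · have hfy' : f y = 0 := by simpa using hfy
    have hgx' : g x = 0 := by simpa using hgx
    ext z
    simp only [pow_two, LinearEquiv.mul_apply, Module.reflection_apply, map_sub, map_smul,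
      hf, hg, hfy', hgx', LinearEquiv.coe_one, id_eq]
    module
  · exact reflection_mul_pow_eq_one_of_three_le hf hg hm (by rw [hfy, hgx]; ring)

namespace CoxeterMatrix

variable {B : Type*} (M : CoxeterMatrix B)

/-- The coroot `f_i`, i.e. the functional on `B →₀ ℝ` with `f_i(α_j) = -2 cos (π / M i j)`. When
`M i j = 0` encodes an infinite order, `π / 0 = 0` gives the customary value `-2`. -/
noncomputable def coroot (i : B) : Module.Dual ℝ (B →₀ ℝ) :=
  Finsupp.linearCombination ℝ fun j ↦ -2 * Real.cos (Real.pi / M i j)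

theorem coroot_single (i j : B) :
    M.coroot i (Finsupp.single j 1) = -2 * Real.cos (Real.pi / M i j) := by
  simp [coroot]

theorem coroot_single_self (i : B) : M.coroot i (Finsupp.single i 1) = 2 := by
  simp [coroot_single]

theorem isLiftable_reflection_s5 :
    M.IsLiftable fun i ↦ Module.reflection (M.coroot_single_self i) := by
  intro i j
  refine reflection_mul_pow_eq_one _ _ _ (fun h ↦ ?_) (M.coroot_single i j) ?_
  · obtain rfl : i = j := by
      by_contra hij
      exact M.off_diagonal i j hij h
    exact ⟨rfl, rfl⟩
  · rw [M.coroot_single, M.symmetric]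

end CoxeterMatrix

namespace CoxeterSystem

variable {B W : Type*} [Group W] {M : CoxeterMatrix B} (cs : CoxeterSystem M W)

/-- The geometric representation of a Coxeter group. -/
noncomputable def geomRep_s5 : W →* ((B →₀ ℝ) ≃ₗ[ℝ] (B →₀ ℝ)) :=
  cs.lift ⟨_, M.isLiftable_reflection_s5⟩

theorem geomRep_simple_s5 (i : B) :
    cs.geomRep_s5 (cs.simple i) = Module.reflection (M.coroot_single_self i) :=
  cs.lift_apply_simple M.isLiftable_reflection_s5 i

/-- The span `V_I` of the simple roots indexed by `I`. -/
noncomputable def rootSpan (I : Set B) : Submodule ℝ (B →₀ ℝ) :=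
  Submodule.span ℝ ((fun i ↦ Finsupp.single i 1) '' I)

theorem finrank_rootSpan [Finite B] (I : Set B) :
    Module.finrank ℝ (rootSpan I) = I.ncard := by
  classical
  have := Fintype.ofFinite B
  have hli : LinearIndependent ℝ (fun i : B ↦ (Finsupp.single i 1 : B →₀ ℝ)) :=
    Finsupp.linearIndependent_single_one ℝ B
  have := (hli.comp ((↑) : I → B) Subtype.val_injective)
  have h2 := finrank_span_eq_card this
  rw [Set.range_comp, Subtype.range_coe] at h2
  rw [rootSpan, ← Nat.card_coe_set_eq, Nat.card_eq_fintype_card, ← h2]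

theorem geomRep_sub_mem_rootSpan {I : Set B} {w : W}
    (hw : w ∈ Subgroup.closure (cs.simple '' I)) (v : B →₀ ℝ) :
    cs.geomRep_s5 w v - v ∈ rootSpan I := by
  induction hw using Subgroup.closure_induction generalizing v with
  | mem w hw =>
    obtain ⟨i, hi, rfl⟩ := hw
    rw [geomRep_simple_s5, Module.reflection_apply, sub_sub_cancel_left]
    exact neg_mem (Submodule.smul_mem _ _ (Submodule.subset_span ⟨i, hi, rfl⟩))
  | one => simp
  | mul a b _ _ ha hb =>
    have := add_mem (ha (cs.geomRep_s5 b v)) (hb v)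
    rwa [sub_add_sub_cancel, ← LinearEquiv.mul_apply, ← map_mul] at this
  | inv a _ ha =>
    have := neg_mem (ha (cs.geomRep_s5 a⁻¹ v))
    rwa [neg_sub, ← LinearEquiv.mul_apply, ← map_mul, mul_inv_cancel, map_one] at this

theorem geomRep_single_mem_rootSpan {I : Set B} {x : W} {k : B}
    (h : x * cs.simple k * x⁻¹ ∈ Subgroup.closure (cs.simple '' I)) :
    cs.geomRep_s5 x (Finsupp.single k 1) ∈ rootSpan I := by
  have h1 := cs.geomRep_sub_mem_rootSpan h (cs.geomRep_s5 x (Finsupp.single k 1))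
  rw [← LinearEquiv.mul_apply, ← map_mul, inv_mul_cancel_right, map_mul, LinearEquiv.mul_apply,
    geomRep_simple_s5, Module.reflection_apply_self, map_neg] at h1
  have h2 := Submodule.smul_mem _ (-(1 / 2) : ℝ) h1
  convert h2 using 1
  module

end CoxeterSystem

/-- If `x W_K x⁻¹ ⊆ W_I` in a finite-rank Coxeter system, then `|K| ≤ |I|`. -/
theorem card_le_of_conj_special_le_special
    {B : Type*} [Finite B] {W : Type*} [Group W] {M : CoxeterMatrix B}
    (cs : CoxeterSystem M W) (K I : Set B) (x : W)
    (h : (Subgroup.closure (cs.simple '' K)).map (MulAut.conj x).toMonoidHom ≤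
      Subgroup.closure (cs.simple '' I)) :
    K.ncard ≤ I.ncard := by
  have hle : (CoxeterSystem.rootSpan K).map (cs.geomRep_s5 x : (B →₀ ℝ) →ₗ[ℝ] (B →₀ ℝ)) ≤
      CoxeterSystem.rootSpan I := by
    rw [Submodule.map_le_iff_le_comap, CoxeterSystem.rootSpan, Submodule.span_le]
    rintro _ ⟨k, hk, rfl⟩
    exact cs.geomRep_single_mem_rootSpan
      (h ⟨cs.simple k, Subgroup.subset_closure ⟨k, hk, rfl⟩, rfl⟩)
  have hfin := Submodule.finrank_mono hle
  rwa [LinearEquiv.finrank_map_eq, CoxeterSystem.finrank_rootSpan,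
    CoxeterSystem.finrank_rootSpan] at hfin
end

section
/- Let (W, S) be a Coxeter system of finite rank and let x ∈ W and K, I ⊆ S. If x W_K x⁻¹ is a proper subgroup of W_I, then |K| < |I|. -/
/-!
Replacing `x` by `u⁻¹ x` with `u ∈ W_I` changes neither hypothesis nor conclusion, so `x` may be
taken of minimal length in `W_I x`. Lengths then add: `ℓ (w x) = ℓ w + ℓ x` for `w ∈ W_I`
(`length_mul_wordProd_of_minimal`, stated for inverses). For `k ∈ K` the element
`w = x s_k x⁻¹ ∈ W_I` satisfies `w x = x s_k`, so `ℓ w + ℓ x ≤ ℓ x + 1`, whence `w` is a simple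
generator `s_i`, with `i ∈ I` because elements of `W_I` have reduced words in `I`. Thus conjugation
by `x` induces an injection `K → I`; if `|I| ≤ |K|` it is onto, and `x W_K x⁻¹ = W_I`.

Two standard facts carry the argument. The exchange condition (`exchange`) comes from the action of
`W` on signed reflections. Injectivity of `i ↦ s_i` (`simple_injective'`) comes from the geometric
representation.
-/

namespace CoxeterSystem

/-! ### The geometric representation and injectivity of the simple generators -/

variable {B : Type*} {W : Type*} [Group W] {M : CoxeterMatrix B}

/-- The entry `-2 cos (π / M i j)` of the Cartan-like matrix of the geometric representation. The
convention `π / 0 = 0` gives the value `-2` when `M i j = 0` encodes an infinite order. -/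
noncomputable def geomCoeff (M : CoxeterMatrix B) (i j : B) : ℝ :=
  -2 * Real.cos (Real.pi / M i j)

/-- The linear form on the space with basis `B` sending the `j`-th basis vector to
`-2 cos (π / M i j)`. -/
noncomputable def coroot (M : CoxeterMatrix B) (i : B) : Module.Dual ℝ (B →₀ ℝ) :=
  Finsupp.linearCombination ℝ (geomCoeff M i)

lemma coroot_single (i j : B) :
    coroot M i (Finsupp.single j 1) = geomCoeff M i j := by
  simp [coroot]

lemma coroot_single_self (i : B) : coroot M i (Finsupp.single i 1) = 2 := by
  simp [coroot_single, geomCoeff]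

/-- The reflection by which the generator `i` acts in the geometric representation. -/
noncomputable def geomReflection (M : CoxeterMatrix B) (i : B) :
    (B →₀ ℝ) ≃ₗ[ℝ] (B →₀ ℝ) :=
  Module.reflection (coroot_single_self (M := M) i)

open Polynomial.Chebyshev in
/-- The geometric representation is well defined. With `θ = π / m`, the product of two reflections
rotates a plane by `2θ`, so its `m`-th power is trivial; concretely, `(r_i r_j) ^ m` is expressed
through Chebyshev polynomials at `2 cos 2θ`, and the coefficients are ratios `sin (n 2θ) / sin 2θ`
that cancel. -/
lemma geomReflection_isLiftable (M : CoxeterMatrix B) :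
    M.IsLiftable (geomReflection M) := by
  intro i j
  rcases eq_or_ne i j with rfl | hij
  · rw [M.diagonal, pow_one]
    exact mul_eq_one_iff_eq_inv.mpr (Module.reflection_inv _).symm
  have h1 : M i j ≠ 1 := M.off_diagonal i j hij
  set m := M i j with hm
  rcases Nat.eq_zero_or_pos m with h0 | hpos
  · rw [h0, pow_zero]
  have hsymm : geomCoeff M j i = geomCoeff M i j := by
    simp [geomCoeff, M.symmetric i j]
  have ht : 2 * Real.cos (2 * (Real.pi / m)) =
      coroot M i (Finsupp.single j 1) * coroot M j (Finsupp.single i 1) - 2 := by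
    rw [coroot_single, coroot_single, hsymm, geomCoeff, Real.cos_two_mul, ← hm]
    ring
  apply LinearEquiv.toLinearMap_injective
  rw [geomReflection, geomReflection, Module.reflection_mul_reflection_pow _ _ m _ ht]
  -- For `m = 2` the denominator `sin 2θ` vanishes, so this case is computed directly.
  rcases eq_or_ne m 2 with h2 | h2
  · have hc : geomCoeff M i j = 0 := by simp [geomCoeff, ← hm, h2]
    have hc' : geomCoeff M j i = 0 := hsymm.trans hc
    have : (2 * (Real.pi / ((2 : ℕ) : ℝ))) = Real.pi := by push_cast; ring
    rw [h2, this]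
    apply LinearMap.ext
    intro z
    simp [hc, hc', coroot_single]
    module
  have hm3 : 3 ≤ m := by omega
  have hmR : (3 : ℝ) ≤ m := by exact_mod_cast hm3
  have hθm : (m : ℝ) * (Real.pi / m) = Real.pi := by field_simp
  set θ := Real.pi / m with hθ
  have hθpos : 0 < θ := by positivity
  have hs : Real.sin (2 * θ) ≠ 0 := by
    apply ne_of_gt
    apply Real.sin_pos_of_pos_of_lt_pi <;> nlinarith [Real.pi_pos]
  rcases Nat.even_or_odd' m with ⟨k, hk | hk⟩
  · have e1 : ((m : ℤ) - 2) / 2 = k - 1 := by omega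
    have e2 : ((m : ℤ) - 1) / 2 = k - 1 := by omega
    have hz : (S ℝ ((k : ℤ) - 1)).eval (2 * Real.cos (2 * θ)) = 0 := by
      have := S_two_mul_real_cos (2 * θ) ((k : ℤ) - 1)
      have h3 : (((((k : ℤ) - 1 : ℤ) : ℝ)) + 1) * (2 * θ) = Real.pi := by
        rw [← hθm, hk]; push_cast; ring
      rw [h3, Real.sin_pi] at this
      exact (mul_eq_zero.mp this).resolve_right hs
    rw [e1, e2, hz]
    simp
  · have e1 : ((m : ℤ) - 3) / 2 = k - 1 := by omega
    have e2 : ((m : ℤ) - 1) / 2 = k := by omega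
    have e3 : ((m : ℤ) - 2) / 2 = k - 1 := by omega
    have e4 : (m : ℤ) / 2 = k := by omega
    have hz : (S ℝ (k : ℤ)).eval (2 * Real.cos (2 * θ)) +
        (S ℝ ((k : ℤ) - 1)).eval (2 * Real.cos (2 * θ)) = 0 := by
      have a1 := S_two_mul_real_cos (2 * θ) (k : ℤ)
      have a2 := S_two_mul_real_cos (2 * θ) ((k : ℤ) - 1)
      have h3 : ((((k : ℤ) : ℝ)) + 1) * (2 * θ) = θ + Real.pi := by
        rw [← hθm, hk]; push_cast; ring
      have h4 : (((((k : ℤ) - 1 : ℤ) : ℝ)) + 1) * (2 * θ) = Real.pi - θ := by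
        rw [← hθm, hk]; push_cast; ring
      rw [h3, Real.sin_add_pi] at a1
      rw [h4, Real.sin_pi_sub] at a2
      refine (mul_eq_zero.mp ?_).resolve_right hs
      rw [add_mul, a1, a2, neg_add_cancel]
    rw [e1, e2, e3, e4, hz]
    simp

/-- Distinct indices give distinct simple generators, as the geometric representation separates
them. -/
theorem simple_injective' (cs : CoxeterSystem M W) : Function.Injective cs.simple := by
  intro i j hij
  by_contra hne
  have h : geomReflection M i = geomReflection M j := by
    rw [← cs.lift_apply_simple (geomReflection_isLiftable M) i, hij,
      cs.lift_apply_simple (geomReflection_isLiftable M) j]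
  have hval := congrArg (fun r => r (Finsupp.single i (1 : ℝ)) i) h
  simp only [geomReflection, Module.reflection_apply, coroot_single_self] at hval
  simp [Ne.symm hne] at hval

/-! ### The action on signed reflections and the exchange condition -/

section

variable (cs : CoxeterSystem M W)

open Classical in
/-- The map `(w, ε) ↦ (s_i w s_i, ε + [w = s_i])` on `W × ZMod 2`. On the first factor only
reflections matter; all of `W` is used so that no subtype is needed. -/
noncomputable def signedConj (i : B) (p : W × ZMod 2) : W × ZMod 2 :=
  (cs.simple i * p.1 * cs.simple i, p.2 + if p.1 = cs.simple i then 1 else 0)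

/-- `signedConj`, as an element of the monoid of self-maps of `W × ZMod 2`. -/
noncomputable def signedConjEnd (i : B) : Function.End (W × ZMod 2) := cs.signedConj i

open Classical in
lemma signedConjEnd_apply (i : B) (p : W × ZMod 2) :
    cs.signedConjEnd i p =
      (cs.simple i * p.1 * cs.simple i, p.2 + if p.1 = cs.simple i then 1 else 0) := rfl

lemma end_mul_apply {α : Type*} (f g : Function.End α) (p : α) : (f * g) p = f (g p) := rfl

lemma end_one_apply {α : Type*} (p : α) : (1 : Function.End α) p = p := rfl

open Classical in
/-- The sign picked up by the `n`-th power of the product of two generators counts the `l < 2 n`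
for which the given element is the reflection `(s_i s_j)⁻ˡ s_j`. -/
lemma signedConj_pow_apply (i j : B) (n : ℕ) (p : W × ZMod 2) :
    ((cs.signedConjEnd i * cs.signedConjEnd j) ^ n) p =
      ((cs.simple i * cs.simple j) ^ n * p.1 * ((cs.simple i * cs.simple j) ^ n)⁻¹,
        p.2 + ∑ l ∈ Finset.range (2 * n),
          if p.1 = ((cs.simple i * cs.simple j) ^ l)⁻¹ * cs.simple j then 1 else 0) := by
  set ρ := cs.simple i * cs.simple j with hρ
  have hinv : ρ⁻¹ = cs.simple j * cs.simple i := by simp [hρ]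
  have hj : ∀ k : ℕ, cs.simple j * ρ ^ k = (ρ ^ k)⁻¹ * cs.simple j := by
    intro k
    have : cs.simple j * ρ * (cs.simple j)⁻¹ = ρ⁻¹ := by rw [hinv, hρ]; simp [mul_assoc]
    have h2 : cs.simple j * ρ ^ k * (cs.simple j)⁻¹ = (ρ ^ k)⁻¹ := by
      rw [← conj_pow, this, inv_pow]
    rw [← h2]; simp [mul_assoc]
  induction n with
  | zero => simpa using end_one_apply p
  | succ n ih =>
    have e1 : (ρ ^ n * p.1 * (ρ ^ n)⁻¹ = cs.simple j) ↔
        p.1 = (ρ ^ (2 * n))⁻¹ * cs.simple j := by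
      rw [mul_inv_eq_iff_eq_mul, hj, ← eq_inv_mul_iff_mul_eq, two_mul, pow_add]
      simp [mul_assoc]
    have e2 : (cs.simple j * (ρ ^ n * p.1 * (ρ ^ n)⁻¹) * cs.simple j = cs.simple i) ↔
        p.1 = (ρ ^ (2 * n + 1))⁻¹ * cs.simple j := by
      have : (cs.simple j * (ρ ^ n * p.1 * (ρ ^ n)⁻¹) * cs.simple j = cs.simple i) ↔
          ρ ^ n * p.1 * (ρ ^ n)⁻¹ = ρ⁻¹ * cs.simple j := by
        rw [hinv]
        constructor
        · intro h; rw [← h]; simp [mul_assoc]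
        · intro h; rw [h]; simp [mul_assoc]
      rw [this, mul_inv_eq_iff_eq_mul, mul_assoc, hj, ← eq_inv_mul_iff_mul_eq]
      have : ρ ^ (2 * n + 1) = ρ ^ n * ρ * ρ ^ n := by
        rw [← pow_succ, ← pow_add]; congr 1; omega
      rw [this]
      simp [mul_assoc]
    rw [pow_succ', end_mul_apply, ih, end_mul_apply]
    simp only [signedConjEnd_apply, e1, e2]
    refine Prod.ext ?_ ?_
    · simp only [pow_succ', hρ, mul_inv_rev, inv_simple, mul_assoc]
    · rw [show 2 * (n + 1) = 2 * n + 1 + 1 by ring, Finset.sum_range_succ, Finset.sum_range_succ]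
      simp only [add_assoc]

/-- The sequence `l ↦ (s_i s_j)⁻ˡ s_j` has period `M i j`, so over `2 * M i j` consecutive indices
every element occurs an even number of times and the total sign is trivial. -/
lemma signedConjEnd_isLiftable : M.IsLiftable cs.signedConjEnd := by
  classical
  intro i j
  funext p
  rw [signedConj_pow_apply, cs.simple_mul_simple_pow, two_mul, Finset.sum_range_add]
  simp only [pow_add, cs.simple_mul_simple_pow, one_mul, ← two_mul]
  rw [show (2 : ZMod 2) = 0 from rfl]
  simpa using (end_one_apply p).symm

/-- The action of `W` on `W × ZMod 2` in which the generator `s_i` acts by `signedConj`. -/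
noncomputable def signedAction : W →* Function.End (W × ZMod 2) :=
  cs.lift ⟨cs.signedConjEnd, cs.signedConjEnd_isLiftable⟩

open Classical in
/-- The sign records the parity of the number of occurrences in the right inversion sequence. In
particular this parity depends only on the product of the word. -/
lemma signedAction_wordProd (ω : List B) (p : W × ZMod 2) :
    cs.signedAction (cs.wordProd ω) p =
      (cs.wordProd ω * p.1 * (cs.wordProd ω)⁻¹,
        p.2 + ((cs.rightInvSeq ω).count p.1 : ZMod 2)) := by
  induction ω with
  | nil => simp; rfl
  | cons i ω ih =>
    rw [wordProd_cons, map_mul, end_mul_apply, ih, signedAction,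
      lift_apply_simple]
    simp only [signedConjEnd_apply, rightInvSeq, List.count_cons]
    have e : (cs.wordProd ω * p.1 * (cs.wordProd ω)⁻¹ = cs.simple i) ↔
        ((cs.wordProd ω)⁻¹ * cs.simple i * cs.wordProd ω == p.1) = true := by
      rw [beq_iff_eq, mul_inv_eq_iff_eq_mul, mul_assoc, inv_mul_eq_iff_eq_mul, eq_comm]
    rw [if_congr e rfl rfl]
    refine Prod.ext ?_ ?_
    · simp [mul_assoc]
    · push_cast
      simp only [add_assoc]

/-- If `s_i` did not occur in the inversion sequence of `ω`, it would occur in that of a reduced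
word for `π ω * s_i`, by parity, and `s_i` would be a descent of both elements. -/
theorem simple_mem_rightInvSeq {ω : List B} {i : B}
    (h : cs.IsRightDescent (cs.wordProd ω) i) : cs.simple i ∈ cs.rightInvSeq ω := by
  classical
  by_contra hmem
  obtain ⟨ω', hω', hprod⟩ := cs.exists_isReduced (cs.wordProd ω * cs.simple i)
  have hmem' : cs.simple i ∈ cs.rightInvSeq ω' := by
    have h0 := cs.signedAction_wordProd ω (cs.simple i, 1)
    have h1 := cs.signedAction_wordProd ω' (cs.simple i, 0)
    rw [← hprod, map_mul, end_mul_apply] at h1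
    have h2 : cs.signedAction (cs.simple i) (cs.simple i, 0) = (cs.simple i, 1) := by
      rw [signedAction, lift_apply_simple]
      simp [signedConjEnd_apply]
    rw [h2, h0, List.count_eq_zero_of_not_mem hmem] at h1
    have h3 := congrArg Prod.snd h1
    by_contra hn
    rw [List.count_eq_zero_of_not_mem hn] at h3
    simp at h3
  have := (cs.isRightInversion_of_mem_rightInvSeq hω' hmem').2
  rw [← hprod, simple_mul_simple_cancel_right] at this
  exact lt_asymm this h

/-- The exchange condition. The word `ω` need not be reduced. -/
theorem exchange {ω : List B} {i : B} (h : cs.IsRightDescent (cs.wordProd ω) i) :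
    ∃ n < ω.length, cs.wordProd ω * cs.simple i = cs.wordProd (ω.eraseIdx n) := by
  obtain ⟨n, hn, he⟩ := List.mem_iff_getElem.mp (cs.simple_mem_rightInvSeq h)
  refine ⟨n, by simpa using hn, ?_⟩
  rw [← he, ← List.getD_eq_getElem _ 1 hn, wordProd_mul_getD_rightInvSeq]

/-! ### Special subgroups and minimal coset representatives -/

lemma wordProd_mem_closure {I : Set B} {ω : List B} (h : ∀ i ∈ ω, i ∈ I) :
    cs.wordProd ω ∈ Subgroup.closure (cs.simple '' I) := by
  apply Subgroup.list_prod_mem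
  intro w hw
  obtain ⟨i, hi, rfl⟩ := List.mem_map.mp hw
  exact Subgroup.subset_closure ⟨i, h i hi, rfl⟩

/-- An element of the special subgroup `W_I` has a reduced word with letters in `I`. -/
theorem exists_isReduced_of_mem_closure {I : Set B} {w : W}
    (hw : w ∈ Subgroup.closure (cs.simple '' I)) :
    ∃ ω : List B, (∀ i ∈ ω, i ∈ I) ∧ cs.IsReduced ω ∧ w = cs.wordProd ω := by
  have step : ∀ (w : W) (i : B), i ∈ I →
      (∃ ω : List B, (∀ i ∈ ω, i ∈ I) ∧ cs.IsReduced ω ∧ w = cs.wordProd ω) →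
      ∃ ω : List B, (∀ i ∈ ω, i ∈ I) ∧ cs.IsReduced ω ∧ w * cs.simple i = cs.wordProd ω := by
    rintro _ i hi ⟨ω, hωI, hred, rfl⟩
    by_cases hd : cs.IsRightDescent (cs.wordProd ω) i
    · obtain ⟨n, hn, he⟩ := cs.exchange hd
      refine ⟨ω.eraseIdx n, fun k hk => hωI k (List.mem_of_mem_eraseIdx hk), ?_, he⟩
      have h1 := cs.isRightDescent_iff.mp hd
      have h2 := List.length_eraseIdx_add_one hn
      have h3 : cs.length (cs.wordProd ω) = ω.length := hred
      rw [IsReduced, ← he]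
      omega
    · refine ⟨ω ++ [i], ?_, ?_, by simp [wordProd_append]⟩
      · intro k hk
        rcases List.mem_append.mp hk with hk | hk
        · exact hωI k hk
        · rwa [List.mem_singleton.mp hk]
      · have h1 := cs.not_isRightDescent_iff.mp hd
        have h3 : cs.length (cs.wordProd ω) = ω.length := hred
        simp [IsReduced, wordProd_append, h1, h3]
  induction hw using Subgroup.closure_induction_right with
  | one => exact ⟨[], by simp, by simp [IsReduced], by simp⟩
  | mul_right x hx y hy ih =>
    obtain ⟨i, hi, rfl⟩ := hy
    exact step _ i hi ih
  | mul_inv_cancel x hx y hy ih =>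
    obtain ⟨i, hi, rfl⟩ := hy
    rw [inv_simple]
    exact step _ i hi ih

/-- If `y` has minimal length in the coset `y W_I`, then lengths add in `y * w` for `w ∈ W_I`. -/
theorem length_mul_wordProd_of_minimal {I : Set B} {y : W}
    (hy : ∀ u ∈ Subgroup.closure (cs.simple '' I), cs.length y ≤ cs.length (y * u))
    (ω : List B) (hI : ∀ i ∈ ω, i ∈ I) (hred : cs.IsReduced ω) :
    cs.length (y * cs.wordProd ω) = cs.length y + ω.length := by
  induction ω using List.reverseRecOn with
  | nil => simp
  | append_singleton ω i ih =>
    have hI' : ∀ k ∈ ω, k ∈ I := fun k hk => hI k (by simp [hk])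
    have hred' : cs.IsReduced ω := by simpa using hred.take ω.length
    have ih := ih hI' hred'
    obtain ⟨τ, hτ, rfl⟩ := cs.exists_isReduced y
    have hlen : cs.length (cs.wordProd τ) = τ.length := hτ
    by_cases hd : cs.IsRightDescent (cs.wordProd (τ ++ ω)) i
    · exfalso
      obtain ⟨n, hn, he⟩ := cs.exchange hd
      rcases lt_or_ge n τ.length with hnτ | hnτ
      -- Deleting a letter of `τ` yields an element of `y W_I` shorter than `y`.
      · rw [List.eraseIdx_append_of_lt_length hnτ, wordProd_append, wordProd_append] at he
        have hu : cs.wordProd ω * cs.simple i * (cs.wordProd ω)⁻¹ ∈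
            Subgroup.closure (cs.simple '' I) := by
          have := cs.wordProd_mem_closure hI'
          exact mul_mem (mul_mem this (Subgroup.subset_closure ⟨i, hI i (by simp), rfl⟩))
            (inv_mem this)
        have h1 := hy _ hu
        have h2 : cs.wordProd τ * (cs.wordProd ω * cs.simple i * (cs.wordProd ω)⁻¹) =
            cs.wordProd (τ.eraseIdx n) := by
          rw [← mul_assoc, ← mul_assoc, he]; simp [mul_assoc]
        rw [h2] at h1
        have h3 := cs.length_wordProd_le (τ.eraseIdx n)
        have h4 := List.length_eraseIdx_add_one hnτ
        omega
      -- Deleting a letter of `ω` contradicts reducedness of `ω ++ [i]`.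
      · rw [List.eraseIdx_append_of_length_le hnτ, wordProd_append, wordProd_append,
          mul_assoc, mul_left_cancel_iff] at he
        have h1 : cs.length (cs.wordProd (ω ++ [i])) = (ω ++ [i]).length := hred
        rw [wordProd_append, wordProd_singleton, he] at h1
        have h3 := cs.length_wordProd_le (ω.eraseIdx (n - τ.length))
        have h4 := List.length_eraseIdx_le ω (n - τ.length)
        simp at h1
        omega
    · have h1 := cs.not_isRightDescent_iff.mp hd
      rw [wordProd_append] at h1
      rw [wordProd_append, wordProd_singleton, ← mul_assoc, h1, ih]
      simp [add_assoc]

end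
end CoxeterSystem

/-- If `x W_K x⁻¹` is a proper subgroup of `W_I` in a finite-rank Coxeter system,
then `|K| < |I|`. -/
theorem card_lt_of_conj_special_lt_special
    {B : Type*} [Finite B] {W : Type*} [Group W] {M : CoxeterMatrix B}
    (cs : CoxeterSystem M W) (K I : Set B) (x : W)
    (h : (Subgroup.closure (cs.simple '' K)).map (MulAut.conj x).toMonoidHom <
      Subgroup.closure (cs.simple '' I)) :
    K.ncard < I.ncard := by
  set WI := Subgroup.closure (cs.simple '' I) with hWI
  -- `u⁻¹ x` is a minimal representative of `W_I x`; the length is that of its inverse.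
  obtain ⟨u, hu, hmin⟩ : ∃ u ∈ WI, ∀ v ∈ WI,
      cs.length (x⁻¹ * u) ≤ cs.length (x⁻¹ * v) := by
    obtain ⟨u, hu⟩ := exists_minimal_of_wellFoundedLT
      (fun n => ∃ v ∈ WI, cs.length (x⁻¹ * v) = n) ⟨_, 1, one_mem _, rfl⟩
    obtain ⟨⟨v, hv, hvu⟩, hm⟩ := hu
    refine ⟨v, hv, fun v' hv' => ?_⟩
    by_contra hlt
    push Not at hlt
    exact absurd (hm ⟨v', hv', rfl⟩ (by omega)) (by omega)
  have hy : ∀ v ∈ WI, cs.length (x⁻¹ * u) ≤ cs.length (x⁻¹ * u * v) := fun v hv => by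
    rw [mul_assoc]; exact hmin _ (mul_mem hu hv)
  have key : ∀ k ∈ K, ∃ i ∈ I,
      u⁻¹ * (x * cs.simple k * x⁻¹) * u = cs.simple i := by
    intro k hk
    have hmem : u⁻¹ * (x * cs.simple k * x⁻¹) * u ∈ WI := by
      refine mul_mem (mul_mem (inv_mem hu) (h.le ?_)) hu
      exact ⟨cs.simple k, Subgroup.subset_closure ⟨k, hk, rfl⟩, by simp⟩
    obtain ⟨ω, hωI, hred, hw⟩ := cs.exists_isReduced_of_mem_closure hmem
    have h1 := cs.length_mul_wordProd_of_minimal hy ω hωI hred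
    rw [← hw] at h1
    have h2 : x⁻¹ * u * (u⁻¹ * (x * cs.simple k * x⁻¹) * u) = cs.simple k * (x⁻¹ * u) := by
      group
    have h3 := cs.length_simple_mul (x⁻¹ * u) k
    rw [h2] at h1
    have h4 : ω.length = 1 := by omega
    obtain ⟨i, rfl⟩ := List.length_eq_one_iff.mp h4
    exact ⟨i, hωI i (by simp), by simpa using hw⟩
  choose! f hfI hf using key
  have hinj : Set.InjOn f K := by
    intro a ha b hb hab
    apply cs.simple_injective'
    have := (hf a ha).trans ((congrArg cs.simple hab).trans (hf b hb).symm)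
    simpa using this
  by_contra hcard
  push Not at hcard
  have himg : f '' K = I := by
    apply Set.eq_of_subset_of_ncard_le
    · rintro _ ⟨k, hk, rfl⟩; exact hfI k hk
    · rwa [hinj.ncard_image]
    · exact Set.toFinite I
  apply h.not_ge
  set Q := (Subgroup.closure (cs.simple '' K)).map (MulAut.conj x).toMonoidHom
  have hle : ∀ w ∈ WI, u * w * u⁻¹ ∈ Q := by
    have : WI ≤ Q.comap (MulAut.conj u).toMonoidHom := by
      rw [hWI, Subgroup.closure_le]
      rintro _ ⟨i, hi, rfl⟩
      rw [← himg] at hi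
      obtain ⟨k, hk, rfl⟩ := hi
      refine ⟨cs.simple k, Subgroup.subset_closure ⟨k, hk, rfl⟩, ?_⟩
      simp [← hf k hk, mul_assoc]
    exact fun w hw => this hw
  intro w hw
  have := hle (u⁻¹ * w * u) (mul_mem (mul_mem (inv_mem hu) hw) hu)
  simpa [mul_assoc] using this
end

section
/- Let (W, S) be a Coxeter system of finite rank and let A be a subset of W. Then the parabolic closure Pc(A), defined as the intersection of all parabolic subgroups of W containing A, is itself a parabolic subgroup of W; that is, there exist w ∈ W and J ⊆ S with Pc(A) = w W_J w⁻¹. -/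
/-!
The proof rests on the exchange property, which is derived from the action of `W` on `W × ZMod 2`
in which `s i` sends `(t, ε)` to `(s i * t * s i, ε + [t = s i])`. The second coordinate records,
modulo 2, how often `t` occurs in the right inversion sequence of a word, so that this parity
depends only on the product of the word (`count_rightInvSeq_eq`); the exchange property
(`exchange_left`) follows.

Let `d` be of minimal length in the coset `W_I d`. Then `W_I ∩ d W_J d⁻¹` is the special subgroup
`W_K`, where `K` is the set of `i ∈ I` with `s i ∈ d W_J d⁻¹` (`inter_le_special`). Indeed, if
`w ∈ W_I` begins with `s i` in a reduced `I`-word and `w d = d v` with `v ∈ W_J`, then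
multiplication by `s i` on the left shortens `w d`; exchanging in a word for `d` followed by
a `J`-word for `v`, the deleted letter cannot lie in `d` by minimality, so it lies in `v`,
whence `s i ∈ d W_J d⁻¹`. One then continues with `s i * w`.

Consequently the intersection of `x W_I x⁻¹` with any parabolic subgroup is a parabolic subgroup
`y W_K y⁻¹` with `K ⊆ I`. A parabolic subgroup `x W_I x⁻¹` containing `A` with `I` of minimal
cardinality is therefore contained in every parabolic subgroup that contains `A`.
-/

namespace ParabolicClosure

open CoxeterSystem

variable {B : Type*} {W : Type*} [Group W] {M : CoxeterMatrix B} (cs : CoxeterSystem M W)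

theorem conj_eq_iff (q t c : W) : q * t * q⁻¹ = c ↔ t = q⁻¹ * c * q := by
  constructor
  · rintro rfl; group
  · rintro rfl; group

open Classical in
/-- The action of the simple reflection `s i` on `W × ZMod 2`: conjugation on the first
coordinate, and a change of sign in the second one exactly at `t = s i`. -/
noncomputable def signAct (i : B) : Function.End (W × ZMod 2) :=
  fun p => (cs.simple i * p.1 * cs.simple i, p.2 + if p.1 = cs.simple i then 1 else 0)

open Classical in
/-- Counted with multiplicity, the elements at which `(s i * s j) ^ n` changes the sign are the
`(s i * s j) ^ (-k) * s j` with `k < 2 * n`. -/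
theorem signAct_pow (i j : B) (n : ℕ) (t : W) (e : ZMod 2) :
    ((signAct cs i * signAct cs j) ^ n) (t, e) =
      ((cs.simple i * cs.simple j) ^ n * t * ((cs.simple i * cs.simple j) ^ n)⁻¹,
        e + ∑ k ∈ Finset.range (2 * n),
          if t = ((cs.simple i * cs.simple j) ^ k)⁻¹ * cs.simple j then (1 : ZMod 2) else 0) := by
  induction n with
  | zero => simp; rfl
  | succ n ih =>
    set a := cs.simple i with ha
    set b := cs.simple j with hb
    have haa : a⁻¹ = a := cs.inv_simple i
    have hbb : b⁻¹ = b := cs.inv_simple j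
    have hcomm : ∀ m : ℕ, b * (a * b) ^ m = ((a * b) ^ m)⁻¹ * b := by
      intro m
      induction m with
      | zero => simp
      | succ m ihm =>
        rw [pow_succ, ← mul_assoc, ihm, ← pow_succ, pow_succ', mul_inv_rev, mul_inv_rev, haa, hbb]
        group
    have h1 : (a * b) ^ n * t * ((a * b) ^ n)⁻¹ = b ↔ t = ((a * b) ^ (2 * n))⁻¹ * b := by
      have : ((a * b) ^ (2 * n))⁻¹ * b = ((a * b) ^ n)⁻¹ * (b * (a * b) ^ n) := by
        rw [hcomm, two_mul, pow_add]; group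
      rw [this, conj_eq_iff, mul_assoc]
    have h2 : b * ((a * b) ^ n * t * ((a * b) ^ n)⁻¹) * b = a ↔
        t = ((a * b) ^ (2 * n + 1))⁻¹ * b := by
      have : ((a * b) ^ (2 * n + 1))⁻¹ * b = ((a * b) ^ n)⁻¹ * (b⁻¹ * a * b⁻¹) * (a * b) ^ n := by
        have h3 : ((a * b) ^ (2 * n + 1))⁻¹ * b
            = ((a * b) ^ n)⁻¹ * (a * b)⁻¹ * (((a * b) ^ n)⁻¹ * b) := by
          rw [show 2 * n + 1 = n + (n + 1) by ring, pow_add, pow_succ', mul_inv_rev,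
            mul_inv_rev (a * b), mul_assoc]
        rw [h3, ← hcomm, mul_inv_rev, haa, hbb]; group
      rw [this, ← conj_eq_iff, eq_mul_inv_iff_mul_eq, eq_inv_mul_iff_mul_eq, mul_assoc]
    rw [pow_succ']
    change signAct cs i (signAct cs j (((signAct cs i * signAct cs j) ^ n) (t, e))) = _
    rw [ih]
    simp only [signAct, ← ha, ← hb]
    rw [show 2 * (n + 1) = 2 * n + 1 + 1 by ring, Finset.sum_range_succ, Finset.sum_range_succ]
    simp only [h1, h2]
    refine Prod.ext ?_ ?_
    · simp only [pow_succ' _ n, mul_inv_rev, haa, hbb]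
      group
    · simp only [add_assoc]

theorem signAct_liftable : M.IsLiftable (signAct cs) := by
  classical
  intro i j
  funext p
  obtain ⟨t, e⟩ := p
  rw [signAct_pow]
  have hp := cs.simple_mul_simple_pow i j
  change _ = (t, e)
  -- The exponents `k` and `k + M i j` give the same reflection, so all contributions cancel.
  rw [two_mul, Finset.sum_range_add]
  simp only [pow_add, hp, one_mul, mul_one, inv_one]
  rw [CharTwo.add_self_eq_zero, add_zero]

open Classical in
theorem lift_wordProd (ω : List B) (t : W) (e : ZMod 2) :
    cs.lift ⟨signAct cs, signAct_liftable cs⟩ (cs.wordProd ω) (t, e) =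
      (cs.wordProd ω * t * (cs.wordProd ω)⁻¹, e + ((cs.rightInvSeq ω).count t : ZMod 2)) := by
  induction ω with
  | nil => simp; rfl
  | cons i ω ih =>
    rw [cs.wordProd_cons, map_mul, cs.lift_apply_simple]
    change signAct cs i (cs.lift ⟨signAct cs, signAct_liftable cs⟩ (cs.wordProd ω) (t, e)) = _
    rw [ih]
    have h : cs.wordProd ω * t * (cs.wordProd ω)⁻¹ = cs.simple i ↔
        (cs.wordProd ω)⁻¹ * cs.simple i * cs.wordProd ω = t := by
      constructor
      · intro h; rw [← h]; group
      · intro h; rw [← h]; group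
    simp only [signAct, h, rightInvSeq, List.count_cons, beq_iff_eq]
    refine Prod.ext ?_ ?_
    · simp only [mul_inv_rev, cs.inv_simple, mul_assoc]
    · push_cast
      simp only [add_assoc]

open Classical in
theorem count_rightInvSeq_eq {ω ω' : List B} (h : cs.wordProd ω = cs.wordProd ω') (t : W) :
    ((cs.rightInvSeq ω).count t : ZMod 2) = (cs.rightInvSeq ω').count t := by
  have h1 := lift_wordProd cs ω t 0
  rw [h, lift_wordProd] at h1
  simpa using (congrArg Prod.snd h1).symm

theorem simple_mem_rightInvSeq {ω : List B} {i : B}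
    (h : cs.length (cs.wordProd ω * cs.simple i) < cs.length (cs.wordProd ω)) :
    cs.simple i ∈ cs.rightInvSeq ω := by
  classical
  obtain ⟨ρ, hρ, hρ'⟩ := cs.exists_isReduced (cs.wordProd ω * cs.simple i)
  have hnot : cs.simple i ∉ cs.rightInvSeq ρ := by
    intro hm
    have := (cs.isRightInversion_of_mem_rightInvSeq hρ hm).2
    rw [← hρ', cs.simple_mul_simple_cancel_right] at this
    omega
  have hprod : cs.wordProd ω = cs.wordProd (ρ.concat i) := by
    rw [cs.wordProd_concat, ← hρ', cs.simple_mul_simple_cancel_right]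
  have hc := count_rightInvSeq_eq cs hprod (cs.simple i)
  have hfix : MulAut.conj (cs.simple i) (cs.simple i) = cs.simple i := by simp
  have h0 : (List.map (MulAut.conj (cs.simple i)) (cs.rightInvSeq ρ)).count (cs.simple i) = 0 := by
    rw [List.count_eq_zero]
    intro hm
    obtain ⟨u, hu, hu'⟩ := List.mem_map.1 hm
    exact hnot ((MulAut.conj (cs.simple i)).injective (hu'.trans hfix.symm) ▸ hu)
  rw [cs.rightInvSeq_concat, List.concat_eq_append, List.count_append, h0] at hc
  by_contra hn
  rw [List.count_eq_zero.2 hn] at hc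
  simp at hc

/-- The exchange property, for an arbitrary (not necessarily reduced) word. -/
theorem exchange_left {ω : List B} {i : B}
    (h : cs.length (cs.simple i * cs.wordProd ω) < cs.length (cs.wordProd ω)) :
    ∃ j < ω.length, cs.simple i * cs.wordProd ω = cs.wordProd (ω.eraseIdx j) := by
  have hm : cs.simple i ∈ cs.rightInvSeq ω.reverse := by
    apply simple_mem_rightInvSeq
    rw [cs.wordProd_reverse, cs.length_inv, ← cs.length_inv]
    simpa using h
  rw [cs.rightInvSeq_reverse, List.mem_reverse] at hm
  obtain ⟨j, hj, hj'⟩ := List.mem_iff_getElem.1 hm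
  refine ⟨j, by simpa using hj, ?_⟩
  rw [← cs.getD_leftInvSeq_mul_wordProd, List.getD_eq_getElem _ _ hj, hj']

/-- The special subgroup `W_I`. -/
abbrev special (I : Set B) : Subgroup W := Subgroup.closure (cs.simple '' I)

theorem simple_mem_special {I : Set B} {i : B} (hi : i ∈ I) : cs.simple i ∈ special cs I :=
  Subgroup.subset_closure ⟨i, hi, rfl⟩

theorem wordProd_mem_special {I : Set B} {ω : List B} (h : ∀ i ∈ ω, i ∈ I) :
    cs.wordProd ω ∈ special cs I := by
  induction ω with
  | nil => simp
  | cons i ω ih =>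
    rw [cs.wordProd_cons]
    exact mul_mem (simple_mem_special cs (h i (by simp))) (ih fun k hk => h k (by simp [hk]))

theorem exists_reduced_word {I : Set B} {w : W} (hw : w ∈ special cs I) :
    ∃ ω : List B, cs.IsReduced ω ∧ (∀ i ∈ ω, i ∈ I) ∧ cs.wordProd ω = w := by
  have step : ∀ i ∈ I, ∀ w : W,
      (∃ ω : List B, cs.IsReduced ω ∧ (∀ i ∈ ω, i ∈ I) ∧ cs.wordProd ω = w) →
      ∃ ω : List B, cs.IsReduced ω ∧ (∀ i ∈ ω, i ∈ I) ∧ cs.wordProd ω = cs.simple i * w := by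
    rintro i hi w ⟨ω, hω, hωI, rfl⟩
    rcases cs.length_simple_mul (cs.wordProd ω) i with h | h
    · refine ⟨i :: ω, ?_, ?_, cs.wordProd_cons i ω⟩
      · rw [CoxeterSystem.IsReduced, cs.wordProd_cons, h, hω.eq, List.length_cons]
      · simpa [hi] using hωI
    · obtain ⟨j, hj, hj'⟩ := exchange_left cs (ω := ω) (i := i) (by omega)
      refine ⟨ω.eraseIdx j, ?_, fun k hk => hωI k (List.mem_of_mem_eraseIdx hk), hj'.symm⟩
      rw [CoxeterSystem.IsReduced, ← hj', List.length_eraseIdx_of_lt hj]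
      have := hω.eq
      omega
  induction hw using Subgroup.closure_induction_left with
  | one => exact ⟨[], by simp [CoxeterSystem.IsReduced], by simp, by simp⟩
  | mul_left x hx y hy ih =>
    obtain ⟨i, hi, rfl⟩ := hx
    exact step i hi y ih
  | inv_mul_cancel x hx y hy ih =>
    obtain ⟨i, hi, rfl⟩ := hx
    rw [cs.inv_simple]
    exact step i hi y ih

/-- `d` has minimal length in the coset `W_I d`. -/
def IsMinimal (I : Set B) (d : W) : Prop :=
  ∀ a ∈ special cs I, cs.length d ≤ cs.length (a * d)

/-- Exchange in a product of two words: the deleted letter lies in one of the factors. -/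
theorem exchange_append {ω δ : List B} {i : B}
    (h : cs.length (cs.simple i * (cs.wordProd ω * cs.wordProd δ)) <
      cs.length (cs.wordProd ω * cs.wordProd δ)) :
    (∃ j < ω.length, cs.simple i * cs.wordProd ω = cs.wordProd (ω.eraseIdx j)) ∨
    (∃ j < δ.length, cs.simple i * (cs.wordProd ω * cs.wordProd δ) =
      cs.wordProd ω * cs.wordProd (δ.eraseIdx j)) := by
  rw [← cs.wordProd_append] at h
  obtain ⟨j, hj, hj'⟩ := exchange_left cs h
  rw [List.length_append] at hj
  rcases lt_or_ge j ω.length with hl | hl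
  · left
    refine ⟨j, hl, ?_⟩
    rw [List.eraseIdx_append_of_lt_length hl, cs.wordProd_append, cs.wordProd_append,
      ← mul_assoc] at hj'
    exact mul_right_cancel hj'
  · right
    refine ⟨j - ω.length, by omega, ?_⟩
    rw [List.eraseIdx_append_of_length_le hl, cs.wordProd_append, cs.wordProd_append] at hj'
    exact hj'

theorem length_mul_of_isMinimal {I : Set B} {d : W} (hd : IsMinimal cs I d) {ω : List B}
    (hω : cs.IsReduced ω) (hI : ∀ i ∈ ω, i ∈ I) :
    cs.length (cs.wordProd ω * d) = ω.length + cs.length d := by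
  induction ω with
  | nil => simp
  | cons i ω ih =>
    have hω' : cs.IsReduced ω := by simpa using hω.drop 1
    have hI' : ∀ k ∈ ω, k ∈ I := fun k hk => hI k (by simp [hk])
    have ih := ih hω' hI'
    rw [cs.wordProd_cons, mul_assoc, List.length_cons]
    rcases cs.length_simple_mul (cs.wordProd ω * d) i with h | h
    · omega
    exfalso
    obtain ⟨δ, hδ, rfl⟩ := cs.exists_isReduced d
    rcases exchange_append cs (ω := ω) (δ := δ) (i := i) (by omega) with ⟨j, hj, hj'⟩ | ⟨j, hj, hj'⟩
    · have h1 := cs.length_wordProd_le (ω.eraseIdx j)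
      rw [← hj', ← cs.wordProd_cons, hω.eq, List.length_eraseIdx_of_lt hj, List.length_cons] at h1
      omega
    · have hw := wordProd_mem_special cs hI'
      have h1 := hd ((cs.wordProd ω)⁻¹ * cs.simple i * cs.wordProd ω)
        (mul_mem (mul_mem (inv_mem hw) (simple_mem_special cs (hI i (by simp)))) hw)
      rw [mul_assoc, mul_assoc, hj', inv_mul_cancel_left, hδ.eq] at h1
      have h2 := cs.length_wordProd_le (δ.eraseIdx j)
      rw [List.length_eraseIdx_of_lt hj] at h2
      omega

/-- For `d` of minimal length in `W_I d`, the subgroup `W_I ∩ d W_J d⁻¹` is generated by the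
simple reflections it contains. -/
theorem inter_le_special {I J : Set B} {d : W} (hd : IsMinimal cs I d) {w : W}
    (hw : w ∈ special cs I) (hw' : d⁻¹ * w * d ∈ special cs J) :
    w ∈ special cs {i | i ∈ I ∧ d⁻¹ * cs.simple i * d ∈ special cs J} := by
  obtain ⟨ω, hω, hωI, rfl⟩ := exists_reduced_word cs hw
  clear hw
  induction ω with
  | nil => simp
  | cons i ω ih =>
    have hω' : cs.IsReduced ω := by simpa using hω.drop 1
    have hI' : ∀ k ∈ ω, k ∈ I := fun k hk => hωI k (by simp [hk])
    have hl := length_mul_of_isMinimal cs hd hω hωI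
    have hl' := length_mul_of_isMinimal cs hd hω' hI'
    rw [List.length_cons] at hl
    obtain ⟨δ, hδ, rfl⟩ := cs.exists_isReduced d
    obtain ⟨ν, -, hνJ, hν⟩ := exists_reduced_word cs hw'
    have hmove : cs.wordProd (i :: ω) * cs.wordProd δ = cs.wordProd δ * cs.wordProd ν := by
      rw [hν]; group
    have hsi : (cs.wordProd δ)⁻¹ * cs.simple i * cs.wordProd δ ∈ special cs J := by
      have hshort : cs.length (cs.simple i * (cs.wordProd δ * cs.wordProd ν)) <
          cs.length (cs.wordProd δ * cs.wordProd ν) := by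
        rw [← hmove, hl, cs.wordProd_cons, mul_assoc, cs.simple_mul_simple_cancel_left, hl']
        omega
      rcases exchange_append cs hshort with ⟨j, hj, hj'⟩ | ⟨j, hj, hj'⟩
      · exfalso
        have h1 := hd _ (simple_mem_special cs (hωI i (by simp)))
        have h2 := cs.length_wordProd_le (δ.eraseIdx j)
        rw [List.length_eraseIdx_of_lt hj] at h2
        rw [hj', hδ.eq] at h1
        omega
      · have heq : (cs.wordProd δ)⁻¹ * cs.simple i * cs.wordProd δ =
            cs.wordProd (ν.eraseIdx j) * (cs.wordProd ν)⁻¹ := by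
          rw [eq_mul_inv_iff_mul_eq, mul_assoc, mul_assoc, hj', inv_mul_cancel_left]
        rw [heq]
        exact mul_mem
          (wordProd_mem_special cs fun k hk => hνJ k (List.mem_of_mem_eraseIdx hk))
          (inv_mem (wordProd_mem_special cs hνJ))
    rw [cs.wordProd_cons]
    refine mul_mem (simple_mem_special cs ⟨hωI i (by simp), hsi⟩) (ih hω' hI' ?_)
    have hrest := mul_mem (inv_mem hsi) hw'
    rw [cs.wordProd_cons] at hrest
    convert hrest using 1
    group

theorem exists_isMinimal (I : Set B) (g : W) :
    ∃ a ∈ special cs I, IsMinimal cs I (a * g) := by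
  obtain ⟨a, ha, hmin⟩ := WellFounded.has_min (measure fun a : W => cs.length (a * g)).wf
    (special cs I : Set W) ⟨1, one_mem _⟩
  refine ⟨a, ha, fun b hb => ?_⟩
  have := hmin (b * a) (mul_mem hb ha)
  change ¬ (cs.length (b * a * g) < cs.length (a * g)) at this
  rw [mul_assoc] at this
  omega

theorem mem_conj_iff (x y : W) (H : Subgroup W) :
    y ∈ H.map (MulAut.conj x).toMonoidHom ↔ x⁻¹ * y * x ∈ H := by
  constructor
  · rintro ⟨z, hz, rfl⟩
    simpa [mul_assoc] using hz
  · intro h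
    exact ⟨_, h, by simp [mul_assoc]⟩

/-- The intersection of two parabolic subgroups is parabolic, of a type contained in that of the
first one; if the types agree, the first subgroup is contained in the second. -/
theorem exists_inter_parabolic (x y : W) (I J : Set B) :
    ∃ (z : W) (K : Set B), K ⊆ I ∧
      (special cs I).map (MulAut.conj x).toMonoidHom ⊓
          (special cs J).map (MulAut.conj y).toMonoidHom =
        (special cs K).map (MulAut.conj z).toMonoidHom ∧
      (K = I → (special cs I).map (MulAut.conj x).toMonoidHom ≤
        (special cs J).map (MulAut.conj y).toMonoidHom) := by
  obtain ⟨a, ha, hmin⟩ := exists_isMinimal cs I (x⁻¹ * y)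
  set d := a * (x⁻¹ * y) with hd
  set K : Set B := {i | i ∈ I ∧ d⁻¹ * cs.simple i * d ∈ special cs J} with hK
  have hKI : special cs K ≤ special cs I :=
    Subgroup.closure_mono (Set.image_mono fun i hi => hi.1)
  have hKJ : ∀ w ∈ special cs K, d⁻¹ * w * d ∈ special cs J := by
    intro w hw
    rw [← mem_conj_iff]
    revert w
    change special cs K ≤ _
    rw [Subgroup.closure_le]
    rintro _ ⟨i, hi, rfl⟩
    exact (mem_conj_iff _ _ _).2 hi.2
  have heq : (special cs I).map (MulAut.conj x).toMonoidHom ⊓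
      (special cs J).map (MulAut.conj y).toMonoidHom =
        (special cs K).map (MulAut.conj (x * a⁻¹)).toMonoidHom := by
    ext g
    rw [Subgroup.mem_inf, mem_conj_iff, mem_conj_iff, mem_conj_iff]
    have e1 : (x * a⁻¹)⁻¹ * g * (x * a⁻¹) = a * (x⁻¹ * g * x) * a⁻¹ := by group
    have e2 : d⁻¹ * (a * (x⁻¹ * g * x) * a⁻¹) * d = y⁻¹ * g * y := by rw [hd]; group
    rw [e1]
    constructor
    · rintro ⟨h1, h2⟩
      exact inter_le_special cs hmin (mul_mem (mul_mem ha h1) (inv_mem ha)) (e2 ▸ h2)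
    · intro h
      refine ⟨?_, e2 ▸ hKJ _ h⟩
      have := mul_mem (mul_mem (inv_mem ha) (hKI h)) ha
      convert this using 1
      group
  refine ⟨x * a⁻¹, K, fun i hi => hi.1, heq, fun hKI' => ?_⟩
  rw [← inf_eq_left, heq, hKI']
  ext g
  rw [mem_conj_iff, mem_conj_iff]
  have e1 : (x * a⁻¹)⁻¹ * g * (x * a⁻¹) = a * (x⁻¹ * g * x) * a⁻¹ := by group
  rw [e1, Subgroup.mul_mem_cancel_right _ (inv_mem ha), Subgroup.mul_mem_cancel_left _ ha]

end ParabolicClosure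

open ParabolicClosure in
/-- **Main theorem.** In a finite-rank Coxeter system, the parabolic closure of a
subset `A ⊆ W` — the intersection of all parabolic subgroups containing `A` — is
itself a parabolic subgroup `w W_J w⁻¹`. -/
theorem parabolic_closure_is_parabolic
    {B : Type*} [Finite B] {W : Type*} [Group W] {M : CoxeterMatrix B}
    (cs : CoxeterSystem M W) (A : Set W) :
    ∃ (w : W) (J : Set B),
      sInf {G : Subgroup W |
          (∃ (x : W) (K : Set B),
            G = (Subgroup.closure (cs.simple '' K)).map (MulAut.conj x).toMonoidHom) ∧
          A ⊆ (G : Set W)} =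
        (Subgroup.closure (cs.simple '' J)).map (MulAut.conj w).toMonoidHom := by
  -- Among the types of parabolic subgroups containing `A` (the whole group is one), take one of
  -- minimal cardinality.
  obtain ⟨I, ⟨x, hx⟩, hmin⟩ := WellFounded.has_min (measure fun I : Set B => I.ncard).wf
    {I : Set B | ∃ x : W,
      A ⊆ ((special cs I).map (MulAut.conj x).toMonoidHom : Set W)}
    ⟨Set.univ, 1, fun a _ => by
      rw [SetLike.mem_coe, mem_conj_iff, special, Set.image_univ, cs.subgroup_closure_range_simple]
      trivial⟩
  refine ⟨x, I, le_antisymm (sInf_le ⟨⟨x, I, rfl⟩, hx⟩) (le_sInf ?_)⟩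
  rintro _ ⟨⟨y, J, rfl⟩, hy⟩
  obtain ⟨z, K, hKI, heq, himp⟩ := exists_inter_parabolic cs x y I J
  apply himp
  refine Set.eq_of_subset_of_ncard_le hKI ?_ (Set.toFinite I)
  refine not_lt.1 (hmin K ⟨z, ?_⟩)
  rw [← heq]
  exact fun a ha => ⟨hx ha, hy ha⟩
end

section
/- Let (W, S) be a Coxeter system of finite rank and let A be a subset of W. If w W_J w⁻¹ and x W_K x⁻¹ are two parabolic subgroups containing A, both of which have minimal rank among all parabolic subgroups containing A (i.e., |J| and |K| are minimal, so |J| = |K|), then w W_J w⁻¹ = x W_K x⁻¹. In particular, the minimal-rank parabolic subgroup containing A is unique. -/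
/-!
Write `W_J` for the subgroup generated by the simple reflections indexed by `J`, and consider two
parabolic subgroups `P = w W_J w⁻¹` and `Q = x W_K x⁻¹`. Choose `d` of minimal length in the double
coset `W_J (w⁻¹ x) W_K`. The heart of the proof is the classical description of intersections
(Kilmoyer, Solomon, Tits): `W_K ∩ d⁻¹ W_J d` lies in `W_L`, where `L` is the set of `k ∈ K` such
that `d s_k d⁻¹` is a simple reflection of `J` (`mem_special_inter`). Hence `P ∩ Q` is contained in
a conjugate of `W_L`, which is contained in `Q`. If `A ⊆ P ∩ Q` and `Q` has minimal rank among the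
parabolic subgroups containing `A`, then `|K| ≤ |L|`, so `L = K`; this means
`d W_K d⁻¹ ≤ W_J` and therefore `Q ≤ P` (`parabolic_le`). Exchanging the roles of `P` and `Q` gives
equality.

The description of intersections rests on the exchange condition (`simple_mem_rightInvSeq`). It is
proved by letting `W` act on `W × ℤ/2`, where `s_i` sends `(t, ε)` to
`(s_i t s_i, ε + [t = s_i])`. The sign change of `(t, ε)` under `w` is the parity of the number of
occurrences of `t` in the right inversion sequence of any word for `w`, so this parity depends
only on `w`. It follows that elements of `W_K` have reduced words in `K`
(`exists_reduced_word`), and that lengths add in `d v` when `d` is minimal in `d W_K` and `v ∈ W_K`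
(`length_mul_of_minimal`).
-/

namespace MinimalParabolic

open CoxeterSystem

variable {B : Type*} {W : Type*} [Group W] {M : CoxeterMatrix B} (cs : CoxeterSystem M W)

/-! ### The exchange condition -/

open Classical in
/-- The action of the simple reflection `s_i` on `W × ℤ/2`: conjugation by `s_i` in the first
coordinate, and a sign change exactly when the first coordinate is `s_i`. -/
noncomputable def signedConj (i : B) : Function.End (W × ZMod 2) :=
  fun p => (cs.simple i * p.1 * cs.simple i, p.2 + if p.1 = cs.simple i then 1 else 0)

open Classical in
/-- The sign picked up under the `m`-th power of `s_i s_j` counts the `k < 2m` for which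
`t = s_j (s_i s_j) ^ k`. -/
lemma signedConj_pow (i j : B) (m : ℕ) (t : W) (ε : ZMod 2) :
    ((signedConj cs i * signedConj cs j) ^ m) (t, ε) =
      ((cs.simple i * cs.simple j) ^ m * t * ((cs.simple i * cs.simple j) ^ m)⁻¹,
        ε + ∑ k ∈ Finset.range (2 * m),
          if t = cs.simple j * (cs.simple i * cs.simple j) ^ k then 1 else 0) := by
  induction m with
  | zero => simp; rfl
  | succ m ih =>
    rw [pow_succ']
    change (signedConj cs i) ((signedConj cs j)
      (((signedConj cs i * signedConj cs j) ^ m) (t, ε))) = _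
    rw [ih, show 2 * (m + 1) = 2 * m + 1 + 1 by ring, Finset.sum_range_succ, Finset.sum_range_succ]
    set c := cs.simple i * cs.simple j with hc
    have hinv : c⁻¹ = cs.simple j * cs.simple i := by simp [hc]
    have hsc : cs.simple j * c * cs.simple j = c⁻¹ := by simp [hc, mul_assoc]
    have hscm : ∀ n : ℕ, (c ^ n)⁻¹ * cs.simple j = cs.simple j * c ^ n := by
      intro n
      have h := conj_pow (i := n) (a := cs.simple j) (b := c)
      rw [cs.inv_simple, hsc, inv_pow] at h
      rw [h]; simp [mul_assoc]
    have e1 : (c ^ m * t * (c ^ m)⁻¹ = cs.simple j) ↔ t = cs.simple j * c ^ (2 * m) := by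
      have : cs.simple j * c ^ (2 * m) = (c ^ m)⁻¹ * cs.simple j * c ^ m := by
        rw [hscm, two_mul, pow_add, mul_assoc]
      rw [this]
      constructor
      · intro h; rw [← h]; group
      · intro h; rw [h]; group
    have e2 : (cs.simple j * (c ^ m * t * (c ^ m)⁻¹) * cs.simple j = cs.simple i) ↔
        t = cs.simple j * c ^ (2 * m + 1) := by
      have : cs.simple j * c ^ (2 * m + 1)
          = (c ^ m)⁻¹ * (cs.simple j * cs.simple i * cs.simple j) * c ^ m := by
        rw [← mul_assoc, ← mul_assoc, hscm, mul_assoc _ (cs.simple i), ← hc,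
          show 2 * m + 1 = m + 1 + m by ring, pow_add, pow_succ]
        simp only [mul_assoc]
      rw [this]
      constructor
      · intro h; rw [← h]
        simp [mul_assoc]
      · intro h; rw [h]
        simp [mul_assoc]
    simp only [signedConj, e1, e2, add_assoc]
    congr 1
    rw [pow_succ', mul_inv_rev, hinv]
    simp only [hc, mul_assoc]

lemma signedConj_liftable : M.IsLiftable (signedConj cs) := by
  classical
  intro i j
  funext p
  obtain ⟨t, ε⟩ := p
  rw [signedConj_pow, cs.simple_mul_simple_pow, two_mul, Finset.sum_range_add]
  simp only [pow_add, cs.simple_mul_simple_pow, one_mul, CharTwo.add_self_eq_zero, add_zero,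
    inv_one, mul_one]
  rfl

/-- The action of `W` on `W × ℤ/2` extending `signedConj`. -/
noncomputable def signedAction : W →* Function.End (W × ZMod 2) :=
  cs.lift ⟨signedConj cs, signedConj_liftable cs⟩

open Classical in
lemma signedAction_wordProd (ω : List B) (t : W) (ε : ZMod 2) :
    signedAction cs (cs.wordProd ω) (t, ε) =
      (cs.wordProd ω * t * (cs.wordProd ω)⁻¹, ε + ((cs.rightInvSeq ω).count t : ZMod 2)) := by
  induction ω with
  | nil => simp; rfl
  | cons i ω ih =>
    rw [wordProd_cons, map_mul]
    change signedAction cs (cs.simple i) (signedAction cs (cs.wordProd ω) (t, ε)) = _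
    rw [ih, signedAction, lift_apply_simple]
    have e : (cs.wordProd ω * t * (cs.wordProd ω)⁻¹ = cs.simple i) ↔
        (cs.wordProd ω)⁻¹ * cs.simple i * cs.wordProd ω = t := by
      constructor
      · intro h; rw [← h]; group
      · intro h; rw [← h]; group
    simp only [signedConj, rightInvSeq, List.count_cons, e, beq_iff_eq]
    simp [mul_assoc, add_assoc]

/-- The exchange condition, in terms of the right inversion sequence of an arbitrary word. -/
lemma simple_mem_rightInvSeq (ω : List B) (i : B)
    (h : cs.length (cs.wordProd ω * cs.simple i) < cs.length (cs.wordProd ω)) :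
    cs.simple i ∈ cs.rightInvSeq ω := by
  classical
  by_contra hn
  obtain ⟨α, hα, hαω⟩ := cs.exists_isReduced (cs.wordProd ω * cs.simple i)
  have hn' : (cs.simple i) ∉ cs.rightInvSeq α := by
    intro hmem
    have := (cs.isRightInversion_of_mem_rightInvSeq hα hmem).2
    rw [← hαω, simple_mul_simple_cancel_right] at this
    omega
  -- `ω` followed by `i`, and `α`, are two words for the same element, in whose inversion
  -- sequences `s_i` occurs once and never, respectively.
  have h1 := signedAction_wordProd cs α (cs.simple i) 0
  have h2 := signedAction_wordProd cs (ω.concat i) (cs.simple i) 0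
  rw [wordProd_concat, hαω, h1, rightInvSeq_concat, List.concat_eq_append] at h2
  have h3 := congrArg Prod.snd h2
  have hn2 : cs.simple i ∉ (cs.rightInvSeq ω).map (MulAut.conj (cs.simple i)) := by
    intro hm
    obtain ⟨r, hr, hr2⟩ := List.mem_map.1 hm
    apply hn
    have : r = cs.simple i := by
      rw [MulAut.conj_apply] at hr2
      have := congrArg (fun z => cs.simple i * z * cs.simple i) hr2
      simpa [mul_assoc] using this
    rwa [← this]
  simp [List.count_eq_zero_of_not_mem hn', List.count_eq_zero_of_not_mem hn2,
    List.count_append] at h3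

lemma mem_rightInvSeq_append (α β : List B) (t : W) (h : t ∈ cs.rightInvSeq (α ++ β)) :
    t ∈ cs.rightInvSeq β ∨
      cs.wordProd β * t * (cs.wordProd β)⁻¹ ∈ cs.rightInvSeq α := by
  induction α with
  | nil => exact Or.inl h
  | cons i α ih =>
    simp only [List.cons_append, rightInvSeq, List.mem_cons] at h ⊢
    rcases h with h | h
    · right; left; rw [h, wordProd_append]; group
    · rcases ih h with h | h
      · exact Or.inl h
      · exact Or.inr (Or.inr h)

lemma exists_eraseIdx (ω : List B) (t : W) (h : t ∈ cs.rightInvSeq ω) :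
    ∃ j < ω.length, cs.wordProd ω * t = cs.wordProd (ω.eraseIdx j) := by
  obtain ⟨j, hj, rfl⟩ := List.mem_iff_getElem.1 h
  refine ⟨j, by simpa using hj, ?_⟩
  rw [← wordProd_mul_getD_rightInvSeq, List.getD_eq_getElem _ _ hj]

/-! ### Special subgroups -/

/-- The special subgroup `W_K` generated by the simple reflections indexed by `K`. -/
abbrev special (K : Set B) : Subgroup W := Subgroup.closure (cs.simple '' K)

lemma simple_mem_special {K : Set B} {k : B} (hk : k ∈ K) : cs.simple k ∈ special cs K :=
  Subgroup.subset_closure ⟨k, hk, rfl⟩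

lemma wordProd_mem_special {K : Set B} (ω : List B) (h : ∀ i ∈ ω, i ∈ K) :
    cs.wordProd ω ∈ special cs K := by
  induction ω with
  | nil => simp
  | cons i ω ih =>
    rw [wordProd_cons]
    exact mul_mem (simple_mem_special cs (h i (by simp))) (ih fun j hj => h j (by simp [hj]))

lemma mem_special_of_mem_rightInvSeq {K : Set B} (ω : List B) (h : ∀ i ∈ ω, i ∈ K) (t : W)
    (ht : t ∈ cs.rightInvSeq ω) : t ∈ special cs K := by
  obtain ⟨j, -, hj⟩ := exists_eraseIdx cs ω t ht
  have h2 := wordProd_mem_special cs (ω.eraseIdx j)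
    fun i hi => h i ((List.eraseIdx_sublist ω j).mem hi)
  rw [← hj] at h2
  exact (Subgroup.mul_mem_cancel_left _ (wordProd_mem_special cs ω h)).1 h2

lemma exists_reduced_word_mul_simple {K : Set B} {k : B} (hk : k ∈ K) (α : List B)
    (hα : cs.IsReduced α) (hK : ∀ i ∈ α, i ∈ K) :
    ∃ ω, cs.IsReduced ω ∧ (∀ i ∈ ω, i ∈ K) ∧ cs.wordProd ω = cs.wordProd α * cs.simple k := by
  rcases cs.length_mul_simple (cs.wordProd α) k with h | h
  · refine ⟨α.concat k, ?_, ?_, cs.wordProd_concat k α⟩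
    · rw [CoxeterSystem.IsReduced, wordProd_concat, h, hα.eq]; simp
    · intro i hi
      rw [List.concat_eq_append, List.mem_append, List.mem_singleton] at hi
      rcases hi with hi | rfl
      · exact hK i hi
      · exact hk
  · obtain ⟨j, hj, hj2⟩ := exists_eraseIdx cs α _ (simple_mem_rightInvSeq cs α k (by omega))
    refine ⟨α.eraseIdx j, ?_, fun i hi => hK i ((List.eraseIdx_sublist α j).mem hi), hj2.symm⟩
    have := hα.eq
    rw [CoxeterSystem.IsReduced, ← hj2, List.length_eraseIdx_of_lt hj]
    omega

/-- Every element of `W_K` has a word in `K` that is reduced in the whole group `W`. -/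
lemma exists_reduced_word {K : Set B} (v : W) (hv : v ∈ special cs K) :
    ∃ ω, cs.IsReduced ω ∧ (∀ i ∈ ω, i ∈ K) ∧ cs.wordProd ω = v := by
  induction hv using Subgroup.closure_induction_right with
  | one => exact ⟨[], by simp [CoxeterSystem.IsReduced], by simp, by simp⟩
  | mul_right x hx y hy ih =>
    obtain ⟨k, hk, rfl⟩ := hy
    obtain ⟨α, h1, h2, rfl⟩ := ih
    exact exists_reduced_word_mul_simple cs hk α h1 h2
  | mul_inv_cancel x hx y hy ih =>
    obtain ⟨k, hk, rfl⟩ := hy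
    obtain ⟨α, h1, h2, rfl⟩ := ih
    rw [cs.inv_simple]
    exact exists_reduced_word_mul_simple cs hk α h1 h2

lemma isReduced_of_concat {ω : List B} {k : B} (h : cs.IsReduced (ω ++ [k])) :
    cs.IsReduced ω := by
  simpa using h.take ω.length

/-- Lengths add in `d v` when `d` is a shortest element of `d W_K` and `v ∈ W_K`. -/
lemma length_mul_of_minimal {K : Set B} (d : W)
    (hd : ∀ v ∈ special cs K, cs.length d ≤ cs.length (d * v)) (v : W) (hv : v ∈ special cs K) :
    cs.length (d * v) = cs.length d + cs.length v := by
  obtain ⟨ω, hω, hK, rfl⟩ := exists_reduced_word cs v hv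
  clear hv
  induction ω using List.reverseRecOn with
  | nil => simp
  | append_singleton ω k ih =>
    have hω' := isReduced_of_concat cs hω
    have hK' : ∀ i ∈ ω, i ∈ K := fun i hi => hK i (by simp [hi])
    have hk : k ∈ K := hK k (by simp)
    have ih := ih hω' hK'
    rw [hω'.eq] at ih
    rw [hω.eq]
    simp only [wordProd_append, wordProd_singleton, ← mul_assoc, List.length_append,
      List.length_singleton]
    rcases cs.length_mul_simple (d * cs.wordProd ω) k with h | h
    · omega
    · exfalso
      obtain ⟨δ, hδ, rfl⟩ := cs.exists_isReduced d
      have hmem := simple_mem_rightInvSeq cs (δ ++ ω) k (by rw [wordProd_append]; omega)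
      rcases mem_rightInvSeq_append cs δ ω _ hmem with hm | hm
      · -- The deleted letter lies in `ω`: then `ω` followed by `k` is not reduced.
        have h2 := (cs.isRightInversion_of_mem_rightInvSeq hω' hm).2
        have h3 := hω.eq
        rw [wordProd_append, wordProd_singleton, List.length_append, List.length_singleton] at h3
        rw [hω'.eq] at h2
        omega
      · -- The deleted letter lies in `δ`: then `d W_K` has an element shorter than `d`.
        have h2 := (cs.isRightInversion_of_mem_rightInvSeq hδ hm).2
        have hw := wordProd_mem_special cs ω hK'
        have := hd _ (mul_mem (mul_mem hw (simple_mem_special cs hk)) (inv_mem hw))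
        omega

lemma exists_simple_of_length_one {K : Set B} (r : W) (hr : r ∈ special cs K)
    (h : cs.length r = 1) : ∃ k ∈ K, r = cs.simple k := by
  obtain ⟨ω, hω, hK, rfl⟩ := exists_reduced_word cs r hr
  rw [hω.eq, List.length_eq_one_iff] at h
  obtain ⟨k, rfl⟩ := h
  exact ⟨k, hK k (by simp), by simp⟩

/-! ### Intersections of parabolic subgroups -/

/-- For `d` of minimal length in `W_J d W_K`, every element of `W_K ∩ d⁻¹ W_J d` is a product of
simple reflections `s_k`, `k ∈ K`, that `d` conjugates to simple reflections of `J`. -/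
lemma mem_special_inter {J K : Set B} (d : W)
    (hd : ∀ u ∈ special cs J, ∀ v ∈ special cs K, cs.length d ≤ cs.length (u * d * v))
    (u v : W) (hu : u ∈ special cs J) (hv : v ∈ special cs K) (huv : u * d = d * v) :
    v ∈ special cs {k ∈ K | ∃ j ∈ J, d * cs.simple k * d⁻¹ = cs.simple j} := by
  have hdK : ∀ v ∈ special cs K, cs.length d ≤ cs.length (d * v) := fun v hv => by
    simpa using hd 1 (one_mem _) v hv
  have hdJ : ∀ u ∈ special cs J, cs.length d⁻¹ ≤ cs.length (d⁻¹ * u) := fun u hu => by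
    have := hd u⁻¹ (inv_mem hu) 1 (one_mem _)
    rwa [mul_one, ← cs.length_inv, ← cs.length_inv (u⁻¹ * d), mul_inv_rev, inv_inv] at this
  obtain ⟨ω, hω, hK, rfl⟩ := exists_reduced_word cs v hv
  clear hv
  induction ω using List.reverseRecOn generalizing u with
  | nil => simp
  | append_singleton ω k ih =>
    have hω' := isReduced_of_concat cs hω
    have hK' : ∀ i ∈ ω, i ∈ K := fun i hi => hK i (by simp [hi])
    have hk : k ∈ K := hK k (by simp)
    have hl := length_mul_of_minimal cs d hdK _ (wordProd_mem_special cs _ hK)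
    have hl' := length_mul_of_minimal cs d hdK _ (wordProd_mem_special cs _ hK')
    rw [hω.eq] at hl
    rw [hω'.eq] at hl'
    have hcancel : u * d * cs.simple k = d * cs.wordProd ω := by
      rw [huv, wordProd_append, wordProd_singleton]; simp [mul_assoc]
    have hdesc : cs.length (u * d * cs.simple k) < cs.length (u * d) := by
      rw [hcancel, huv, hl, hl']; simp
    have key : d * cs.simple k * d⁻¹ ∈ special cs J := by
      obtain ⟨α, -, hα, rfl⟩ := exists_reduced_word cs u hu
      obtain ⟨δ, hδ, rfl⟩ := cs.exists_isReduced d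
      have hmem := simple_mem_rightInvSeq cs (α ++ δ) k (by rw [wordProd_append]; exact hdesc)
      rcases mem_rightInvSeq_append cs α δ _ hmem with hm | hm
      · have h2 := (cs.isRightInversion_of_mem_rightInvSeq hδ hm).2
        have := hdK _ (simple_mem_special cs hk)
        omega
      · exact mem_special_of_mem_rightInvSeq cs α hα _ hm
    -- Additivity of lengths on both sides of `(d s_k d⁻¹) d = d s_k` forces `d s_k d⁻¹` to
    -- have length one.
    have hlen : cs.length (d * cs.simple k * d⁻¹) = 1 := by
      have h1 := length_mul_of_minimal cs d⁻¹ hdJ _ (inv_mem key)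
      have h2 := length_mul_of_minimal cs d hdK _ (simple_mem_special cs hk)
      rw [cs.length_inv, cs.length_inv, ← mul_inv_rev, cs.length_inv,
        inv_mul_cancel_right, h2, cs.length_simple] at h1
      omega
    obtain ⟨j, hj, hjk⟩ := exists_simple_of_length_one cs _ key hlen
    rw [wordProd_append, wordProd_singleton]
    refine mul_mem (ih (u * (d * cs.simple k * d⁻¹)) (mul_mem hu key) hω' hK' ?_)
      (simple_mem_special cs ⟨hk, j, hj, hjk⟩)
    rw [← hcancel]; group

lemma exists_minimal_double_coset (J K : Set B) (g : W) :
    ∃ a ∈ special cs J, ∃ b ∈ special cs K, ∃ d, g = a * d * b ∧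
      ∀ u ∈ special cs J, ∀ v ∈ special cs K, cs.length d ≤ cs.length (u * d * v) := by
  let S : Set W := {d | ∃ a ∈ special cs J, ∃ b ∈ special cs K, g = a * d * b}
  have hS : S.Nonempty := ⟨g, 1, one_mem _, 1, one_mem _, by simp⟩
  obtain ⟨d, ⟨a, ha, b, hb, hg⟩, hmin⟩ :=
    (measure cs.length).wf.has_min S hS
  refine ⟨a, ha, b, hb, d, hg, fun u hu v hv => not_lt.1 (hmin (u * d * v) ?_)⟩
  exact ⟨a * u⁻¹, mul_mem ha (inv_mem hu), v⁻¹ * b, mul_mem (inv_mem hv) hb, by rw [hg]; group⟩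

lemma mem_conj_iff (H : Subgroup W) (w y : W) :
    y ∈ H.map (MulAut.conj w).toMonoidHom ↔ w⁻¹ * y * w ∈ H := by
  constructor
  · rintro ⟨h, hh, rfl⟩
    have : w⁻¹ * (MulAut.conj w).toMonoidHom h * w = h := by
      simp [mul_assoc]
    rw [this]; exact hh
  · intro h
    exact ⟨_, h, by simp [mul_assoc]⟩

/-- A parabolic subgroup of minimal rank among those containing `A` is contained in every
parabolic subgroup containing `A`. -/
lemma parabolic_le [Finite B] (A : Set W) (w x : W) (J K : Set B)
    (hJ : A ⊆ ((special cs J).map (MulAut.conj w).toMonoidHom : Set W))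
    (hK : A ⊆ ((special cs K).map (MulAut.conj x).toMonoidHom : Set W))
    (hKmin : ∀ (y : W) (L : Set B),
      A ⊆ ((special cs L).map (MulAut.conj y).toMonoidHom : Set W) → K.ncard ≤ L.ncard) :
    (special cs K).map (MulAut.conj x).toMonoidHom ≤
      (special cs J).map (MulAut.conj w).toMonoidHom := by
  obtain ⟨a, ha, b, hb, d, hg, hd⟩ := exists_minimal_double_coset cs J K (w⁻¹ * x)
  have hx : x = w * (a * d * b) := by rw [← hg]; group
  set L : Set B := {k ∈ K | ∃ j ∈ J, d * cs.simple k * d⁻¹ = cs.simple j} with hL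
  have hAL : A ⊆ ((special cs L).map (MulAut.conj (x * b⁻¹)).toMonoidHom : Set W) := by
    intro y hy
    have h1 := (mem_conj_iff _ _ _).1 (hJ hy)
    have h2 := (mem_conj_iff _ _ _).1 (hK hy)
    refine (mem_conj_iff _ _ _).2 ?_
    refine mem_special_inter cs d hd (a⁻¹ * (w⁻¹ * y * w) * a) _
      (mul_mem (mul_mem (inv_mem ha) h1) ha) ?_ ?_
    · have := mul_mem (mul_mem hb h2) (inv_mem hb)
      convert this using 1; group
    · rw [hx]; group
  have hLK : L = K :=
    Set.eq_of_subset_of_ncard_le (fun k hk => hk.1) (hKmin _ _ hAL) (Set.toFinite _)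
  have hconj : special cs K ≤ (special cs J).map (MulAut.conj d⁻¹).toMonoidHom := by
    rw [Subgroup.closure_le]
    rintro _ ⟨k, hk, rfl⟩
    rw [← hLK] at hk
    obtain ⟨-, j, hj, hjk⟩ := hk
    refine (mem_conj_iff _ _ _).2 ?_
    rw [inv_inv, hjk]
    exact simple_mem_special cs hj
  intro y hy
  have h2 := (mem_conj_iff _ _ _).1 hy
  have h3 := (mem_conj_iff _ _ _).1 (hconj (mul_mem (mul_mem hb h2) (inv_mem hb)))
  refine (mem_conj_iff _ _ _).2 ?_
  have h4 := mul_mem (mul_mem ha h3) (inv_mem ha)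
  convert h4 using 1
  rw [hx]; group

end MinimalParabolic


/-- Uniqueness of the minimal-rank parabolic subgroup containing a subset `A`:
if `w W_J w⁻¹` and `x W_K x⁻¹` both contain `A` and both have minimal rank among
parabolic subgroups containing `A`, then they coincide. -/
theorem minimal_parabolic_unique
    {B : Type*} [Finite B] {W : Type*} [Group W] {M : CoxeterMatrix B}
    (cs : CoxeterSystem M W) (A : Set W) (w x : W) (J K : Set B)
    (hJ : A ⊆ ((Subgroup.closure (cs.simple '' J)).map (MulAut.conj w).toMonoidHom : Set W))
    (hK : A ⊆ ((Subgroup.closure (cs.simple '' K)).map (MulAut.conj x).toMonoidHom : Set W))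
    (hJmin : ∀ (y : W) (L : Set B),
      A ⊆ ((Subgroup.closure (cs.simple '' L)).map (MulAut.conj y).toMonoidHom : Set W) →
      J.ncard ≤ L.ncard)
    (hKmin : ∀ (y : W) (L : Set B),
      A ⊆ ((Subgroup.closure (cs.simple '' L)).map (MulAut.conj y).toMonoidHom : Set W) →
      K.ncard ≤ L.ncard) :
    (Subgroup.closure (cs.simple '' J)).map (MulAut.conj w).toMonoidHom =
      (Subgroup.closure (cs.simple '' K)).map (MulAut.conj x).toMonoidHom := by
  exact le_antisymm (MinimalParabolic.parabolic_le cs A x w K J hK hJ hJmin)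
    (MinimalParabolic.parabolic_le cs A w x J K hJ hK hKmin)
end

section
/- Let (W, S) be a Coxeter system of finite rank and A ⊆ W a subset. Among all parabolic subgroups w W_J w⁻¹ of W containing A, there exists one minimizing |J|, and this parabolic subgroup equals the intersection of all parabolic subgroups of W containing A. -/
/-!
The proof rests on one fact about two parabolic subgroups: for `J K : Set B` and `x : W` there
are `u ∈ W_K` and `K' ⊆ K` with `W_K ∩ x⁻¹ W_J x = u W_{K'} u⁻¹`. Granting it, let `w W_J w⁻¹`
contain `A` with `|J|` minimal, and let `Q` be any parabolic subgroup containing `A`. The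
intersection of the two is `w u W_{J'} u⁻¹ w⁻¹` with `J' ⊆ J` and `u ∈ W_J`. It contains `A`, so
minimality forces `J' = J`, and then the intersection is `w W_J w⁻¹`, because `u` normalizes `W_J`.
Hence `w W_J w⁻¹ ⊆ Q`.

The fact about intersections comes from the parity cocycle `n(w, t) ∈ ℤ/2`, which counts modulo 2
the occurrences of `t` in the right inversion sequence of any word for `w`. It is well defined
because `s_i` acts on `W × ℤ/2` by `(t, e) ↦ (s_i t s_i, e + [t = s_i])` and these maps satisfy
the Coxeter relations (`parityMap_isLiftable`). If `n(w, t) ≠ 0`, then `w t` is obtained from any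
word for `w` by deleting a letter, and `t` lies in `W_K` when `w` does.

Let `d` be of minimal length in `x W_K`, so that `n(d, ·)` vanishes on `W_K`. If `v ∈ W_K` and
`d v = w d` with `w ∈ W_J`, then comparing `n(d v, t)` with `n(w d, t)` shows that `n(v, t) ≠ 0`
implies `d t d⁻¹ ∈ W_J` (`conj_mem_of_parity_ne_zero`). Peeling letters off a word for `v` then
shows that `v` is a product of simple reflections `s_k`, `k ∈ K`, with `d s_k d⁻¹ ∈ W_J`.
-/

namespace CoxeterParabolic

open CoxeterSystem

variable {B : Type*} {W : Type*} [Group W] {M : CoxeterMatrix B} (cs : CoxeterSystem M W)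

/-! ### The parity cocycle -/

lemma end_mul_apply {X : Type*} (f g : Function.End X) (x : X) : (f * g) x = f (g x) := rfl

lemma end_one_apply {X : Type*} (x : X) : (1 : Function.End X) x = x := rfl

open Classical in
/-- The action of the simple reflection `s_i` on `W × ℤ/2`:
`(t, e) ↦ (s_i t s_i, e + [t = s_i])`. The first factor is all of `W` rather than the set of
reflections. -/
noncomputable def parityMap (i : B) : Function.End (W × ZMod 2) :=
  fun p => (cs.simple i * p.1 * cs.simple i, p.2 + if p.1 = cs.simple i then 1 else 0)

lemma simple_mul_pow_conj (i j : B) (k : ℕ) :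
    cs.simple j * (cs.simple i * cs.simple j) ^ k * cs.simple j
      = ((cs.simple i * cs.simple j) ^ k)⁻¹ := by
  have h : cs.simple j * (cs.simple i * cs.simple j) * (cs.simple j)⁻¹
      = (cs.simple i * cs.simple j)⁻¹ := by
    simp [mul_assoc]
  have h2 := conj_pow (i := k) (a := cs.simple j) (b := cs.simple i * cs.simple j)
  rw [h, inv_pow, cs.inv_simple] at h2
  exact h2.symm

open Classical in
/-- With `p = s_i s_j`, the reflections met along `(s_i s_j)^k` are the `s_j p^n`, `n < 2k`. -/
lemma parityMap_mul_pow (i j : B) (k : ℕ) (t : W) (e : ZMod 2) :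
    ((parityMap cs i * parityMap cs j) ^ k) (t, e) =
      ((cs.simple i * cs.simple j) ^ k * t * ((cs.simple i * cs.simple j) ^ k)⁻¹,
        e + ∑ n ∈ Finset.range (2 * k),
          if t = cs.simple j * (cs.simple i * cs.simple j) ^ n then 1 else 0) := by
  induction k with
  | zero => simp [end_one_apply]
  | succ k ih =>
    rw [pow_succ', end_mul_apply, ih]
    have hc := simple_mul_pow_conj cs i j k
    have h1 : ((cs.simple i * cs.simple j) ^ k * t * ((cs.simple i * cs.simple j) ^ k)⁻¹
        = cs.simple j) ↔ t = cs.simple j * (cs.simple i * cs.simple j) ^ (2 * k) := by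
      rw [mul_inv_eq_iff_eq_mul, ← eq_inv_mul_iff_mul_eq, ← hc, two_mul, pow_add]
      simp [mul_assoc]
    have h2 : (cs.simple j * ((cs.simple i * cs.simple j) ^ k * t *
        ((cs.simple i * cs.simple j) ^ k)⁻¹) * cs.simple j
        = cs.simple i) ↔ t = cs.simple j * (cs.simple i * cs.simple j) ^ (2 * k + 1) := by
      have : 2 * k + 1 = k + (1 + k) := by ring
      rw [this, pow_add _ k, pow_add _ 1 k, ← mul_assoc (cs.simple j) _ (_ * _),
        ← cs.simple_mul_simple_cancel_right (w := cs.simple j * _ ^ k) j, hc]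
      generalize (cs.simple i * cs.simple j) ^ k = q
      constructor
      · intro h
        rw [← h]
        simp [mul_assoc]
      · rintro rfl
        simp [mul_assoc]
    rw [end_mul_apply]
    have h3 : 2 * (k + 1) = 2 * k + 1 + 1 := by ring
    simp only [parityMap, h1, h2, h3, Finset.sum_range_succ]
    refine Prod.ext ?_ ?_
    · simp [pow_succ', mul_assoc]
    · simp only [add_assoc]

lemma parityMap_isLiftable : M.IsLiftable (parityMap cs) := by
  classical
  intro i j
  funext ⟨t, e⟩
  rw [parityMap_mul_pow, end_one_apply]
  have hp := cs.simple_mul_simple_pow i j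
  refine Prod.ext (by simp [hp]) ?_
  -- The terms `n` and `n + m` agree because `p ^ m = 1`, so the sum vanishes modulo 2.
  simp only [two_mul, Finset.sum_range_add, pow_add, hp, one_mul]
  rw [CharTwo.add_self_eq_zero, add_zero]

/-- The parity cocycle `n(w, t)`: the number, modulo 2, of occurrences of `t` in the right
inversion sequence of a word for `w`. -/
noncomputable def parity (w t : W) : ZMod 2 :=
  (cs.lift ⟨parityMap cs, parityMap_isLiftable cs⟩ w (t, 0)).2

lemma lift_apply (w t : W) (e : ZMod 2) :
    cs.lift ⟨parityMap cs, parityMap_isLiftable cs⟩ w (t, e)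
      = (w * t * w⁻¹, e + parity cs w t) := by
  unfold parity
  induction w using cs.simple_induction_left generalizing t e with
  | one => simp [end_one_apply]
  | mul_simple_left w i ih =>
    rw [map_mul, cs.lift_apply_simple, end_mul_apply,
      end_mul_apply, ih, ih]
    refine Prod.ext ?_ ?_
    · simp [parityMap, mul_assoc]
    · simp [parityMap, add_assoc]

lemma parity_mul (w₁ w₂ t : W) :
    parity cs (w₁ * w₂) t = parity cs w₂ t + parity cs w₁ (w₂ * t * w₂⁻¹) := by
  conv_lhs => rw [parity, map_mul, end_mul_apply, lift_apply,
    lift_apply]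
  simp

open Classical in
lemma parity_simple (i : B) (t : W) :
    parity cs (cs.simple i) t = if t = cs.simple i then 1 else 0 := by
  rw [parity, cs.lift_apply_simple]
  simp [parityMap]

lemma parity_one (t : W) : parity cs 1 t = 0 := by
  simp [parity, end_one_apply]

lemma mem_rightInvSeq_of_parity_ne_zero (ω : List B) (t : W)
    (h : parity cs (cs.wordProd ω) t ≠ 0) : t ∈ cs.rightInvSeq ω := by
  induction ω with
  | nil => simp [parity_one] at h
  | cons i ω ih =>
    rw [wordProd_cons, parity_mul, parity_simple] at h
    rw [rightInvSeq, List.mem_cons]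
    by_cases ht : cs.wordProd ω * t * (cs.wordProd ω)⁻¹ = cs.simple i
    · left
      rw [← ht]
      simp [mul_assoc]
    · right
      rw [if_neg ht, add_zero] at h
      exact ih h

lemma exists_eraseIdx_of_parity_ne_zero (ω : List B) (t : W)
    (h : parity cs (cs.wordProd ω) t ≠ 0) :
    ∃ j < ω.length, cs.wordProd ω * t = cs.wordProd (ω.eraseIdx j) := by
  obtain ⟨j, hj, rfl⟩ := List.getElem_of_mem (mem_rightInvSeq_of_parity_ne_zero cs ω t h)
  refine ⟨j, by simpa using hj, ?_⟩
  rw [← cs.wordProd_mul_getD_rightInvSeq, List.getD_eq_getElem _ _ hj]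

lemma length_mul_lt_of_parity_ne_zero (w t : W) (h : parity cs w t ≠ 0) :
    cs.length (w * t) < cs.length w := by
  obtain ⟨ω, hω, rfl⟩ := cs.exists_isReduced w
  obtain ⟨j, hj, h'⟩ := exists_eraseIdx_of_parity_ne_zero cs ω t h
  rw [h', hω.eq]
  refine (cs.length_wordProd_le _).trans_lt ?_
  rw [List.length_eraseIdx_of_lt hj]
  omega

/-! ### Special subgroups and their intersections with parabolic subgroups -/

/-- The special subgroup `W_K`. -/
abbrev special (K : Set B) : Subgroup W := Subgroup.closure (cs.simple '' K)

lemma simple_mem_special {K : Set B} {k : B} (hk : k ∈ K) : cs.simple k ∈ special cs K :=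
  Subgroup.subset_closure ⟨k, hk, rfl⟩

lemma wordProd_mem_special {K : Set B} (ω : List B) (h : ∀ k ∈ ω, k ∈ K) :
    cs.wordProd ω ∈ special cs K := by
  refine Subgroup.list_prod_mem _ fun x hx => ?_
  obtain ⟨k, hk, rfl⟩ := List.mem_map.1 hx
  exact simple_mem_special cs (h k hk)

lemma exists_word_of_mem_special {K : Set B} {v : W} (hv : v ∈ special cs K) :
    ∃ ω : List B, (∀ k ∈ ω, k ∈ K) ∧ v = cs.wordProd ω := by
  induction hv using Subgroup.closure_induction with
  | mem x hx =>
    obtain ⟨k, hk, rfl⟩ := hx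
    exact ⟨[k], by simpa using hk, by simp⟩
  | one => exact ⟨[], by simp, by simp⟩
  | mul x y _ _ hx hy =>
    obtain ⟨ω, h, rfl⟩ := hx
    obtain ⟨ω', h', rfl⟩ := hy
    refine ⟨ω ++ ω', fun k hk => ?_, (cs.wordProd_append _ _).symm⟩
    exact (List.mem_append.1 hk).elim (h k) (h' k)
  | inv x _ hx =>
    obtain ⟨ω, h, rfl⟩ := hx
    exact ⟨ω.reverse, fun k hk => h k (List.mem_reverse.1 hk), by simp⟩

lemma mem_special_of_parity_ne_zero {K : Set B} {v t : W} (hv : v ∈ special cs K)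
    (h : parity cs v t ≠ 0) : t ∈ special cs K := by
  obtain ⟨ω, hω, rfl⟩ := exists_word_of_mem_special cs hv
  obtain ⟨j, -, h'⟩ := exists_eraseIdx_of_parity_ne_zero cs ω t h
  rw [← eq_inv_mul_iff_mul_eq] at h'
  rw [h']
  exact mul_mem (inv_mem hv)
    (wordProd_mem_special cs _ fun k hk => hω k (List.mem_of_mem_eraseIdx hk))

/-- Inversions of `v ∈ W_K ∩ d⁻¹ W_J d` again lie in `d⁻¹ W_J d`, for `d` of minimal length in
`d W_K`. -/
lemma conj_mem_of_parity_ne_zero {J K : Set B} {d v t : W}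
    (hd : ∀ u ∈ special cs K, cs.length d ≤ cs.length (d * u))
    (hv : v ∈ special cs K) (hdv : d * v * d⁻¹ ∈ special cs J)
    (ht : parity cs v t ≠ 0) : d * t * d⁻¹ ∈ special cs J := by
  have htK := mem_special_of_parity_ne_zero cs hv ht
  have hd0 : ∀ u ∈ special cs K, parity cs d u = 0 := fun u hu => by
    by_contra h
    exact absurd (length_mul_lt_of_parity_ne_zero cs d u h) (hd u hu).not_gt
  refine mem_special_of_parity_ne_zero cs hdv ?_
  have h1 := parity_mul cs d v t
  have h2 := parity_mul cs (d * v * d⁻¹) d t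
  rw [hd0 _ (mul_mem (mul_mem hv htK) (inv_mem hv)), add_zero] at h1
  rw [hd0 _ htK, zero_add, inv_mul_cancel_right, h1] at h2
  rwa [← h2]

/-- For `d` of minimal length in `d W_K`, the subgroup `W_K ∩ d⁻¹ W_J d` is generated by the simple
reflections indexed by `K` that it contains. Induction on the length of a word in `K` for the
element: either its last letter can be peeled off, or the word can be shortened. -/
lemma mem_special_inter {J K : Set B} {d : W}
    (hd : ∀ u ∈ special cs K, cs.length d ≤ cs.length (d * u)) (n : ℕ) (ω : List B)
    (hn : ω.length ≤ n) (hω : ∀ k ∈ ω, k ∈ K)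
    (hJ : d * cs.wordProd ω * d⁻¹ ∈ special cs J) :
    cs.wordProd ω ∈ special cs {k ∈ K | d * cs.simple k * d⁻¹ ∈ special cs J} := by
  induction n generalizing ω with
  | zero =>
    rw [List.length_eq_zero_iff.1 (Nat.le_zero.1 hn)]
    simp
  | succ n ih =>
    rcases List.eq_nil_or_concat ω with rfl | ⟨ω', k, rfl⟩
    · simp
    rw [List.concat_eq_append] at hn hω
    have hk : k ∈ K := hω k (by simp)
    have hω' : ∀ k ∈ ω', k ∈ K := fun k hk => hω k (by simp [hk])
    have hlen : ω'.length ≤ n := by simpa using hn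
    rw [wordProd_concat] at hJ ⊢
    by_cases h : parity cs (cs.wordProd ω' * cs.simple k) (cs.simple k) = 0
    · rw [parity_mul, parity_simple, if_pos rfl, mul_inv_cancel_right] at h
      have h' : parity cs (cs.wordProd ω') (cs.simple k) ≠ 0 := by
        intro h0
        rw [h0] at h
        simp at h
      obtain ⟨j, hj, h2⟩ := exists_eraseIdx_of_parity_ne_zero cs ω' _ h'
      rw [h2] at hJ ⊢
      exact ih _ ((List.length_eraseIdx_le ..).trans hlen)
        (fun k hk => hω' k (List.mem_of_mem_eraseIdx hk)) hJ
    · have hkJ := conj_mem_of_parity_ne_zero cs hd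
        (mul_mem (wordProd_mem_special cs ω' hω') (simple_mem_special cs hk)) hJ h
      refine mul_mem (ih ω' hlen hω' ?_) (simple_mem_special cs ⟨hk, hkJ⟩)
      have := mul_mem hJ (inv_mem hkJ)
      simpa [mul_assoc] using this

/-- The intersection `W_K ∩ x⁻¹ W_J x` is conjugate in `W_K` to a special subgroup `W_{K'}` with
`K' ⊆ K`. -/
lemma exists_special_inter (J K : Set B) (x : W) :
    ∃ u ∈ special cs K, ∃ K' ⊆ K, ∀ v : W,
      (v ∈ special cs K ∧ x * v * x⁻¹ ∈ special cs J) ↔ u⁻¹ * v * u ∈ special cs K' := by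
  obtain ⟨⟨u, hu⟩, hmin⟩ : ∃ u : special cs K, ∀ y : special cs K,
      cs.length (x * u) ≤ cs.length (x * y) :=
    ⟨_, fun y => Function.argmin_le (fun y : special cs K => cs.length (x * y)) y⟩
  have hd : ∀ y ∈ special cs K, cs.length (x * u) ≤ cs.length (x * u * y) := fun y hy => by
    simpa [mul_assoc] using hmin ⟨u * y, mul_mem hu hy⟩
  refine ⟨u, hu, {k ∈ K | (x * u) * cs.simple k * (x * u)⁻¹ ∈ special cs J},
    fun k hk => hk.1, fun v => ⟨?_, ?_⟩⟩
  · rintro ⟨hv, hvJ⟩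
    obtain ⟨ω, hω, h⟩ := exists_word_of_mem_special cs (mul_mem (mul_mem (inv_mem hu) hv) hu)
    rw [h]
    refine mem_special_inter cs hd _ ω le_rfl hω ?_
    rw [← h]
    simpa [mul_assoc] using hvJ
  · intro h
    have key : special cs {k ∈ K | (x * u) * cs.simple k * (x * u)⁻¹ ∈ special cs J}
        ≤ special cs K ⊓ (special cs J).comap (MulAut.conj (x * u)).toMonoidHom := by
      rw [Subgroup.closure_le]
      rintro _ ⟨k, ⟨hk, hkJ⟩, rfl⟩
      exact ⟨simple_mem_special cs hk, by simpa [mul_assoc] using hkJ⟩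
    obtain ⟨h1, h2⟩ := key h
    constructor
    · have := mul_mem (mul_mem hu h1) (inv_mem hu)
      simpa [mul_assoc] using this
    · simpa [mul_assoc] using h2

lemma mem_conj_iff (H : Subgroup W) (w a : W) :
    a ∈ H.map (MulAut.conj w).toMonoidHom ↔ w⁻¹ * a * w ∈ H := by
  rw [Subgroup.mem_map]
  constructor
  · rintro ⟨b, hb, rfl⟩
    simpa [mul_assoc] using hb
  · exact fun h => ⟨_, h, by simp [mul_assoc]⟩

end CoxeterParabolic

open CoxeterParabolic in
/-- In a finite-rank Coxeter system, among all parabolic subgroups `w W_J w⁻¹`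
containing a subset `A ⊆ W` there is one minimizing `|J|`, and this parabolic
subgroup equals the intersection of all parabolic subgroups containing `A`. -/
theorem exists_minimal_parabolic_eq_inter
    {B : Type*} [Finite B] {W : Type*} [Group W] {M : CoxeterMatrix B}
    (cs : CoxeterSystem M W) (A : Set W) :
    ∃ (w : W) (J : Set B),
      A ⊆ ((Subgroup.closure (cs.simple '' J)).map (MulAut.conj w).toMonoidHom : Set W) ∧
      (∀ (x : W) (K : Set B),
        A ⊆ ((Subgroup.closure (cs.simple '' K)).map (MulAut.conj x).toMonoidHom : Set W) →
        J.ncard ≤ K.ncard) ∧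
      (Subgroup.closure (cs.simple '' J)).map (MulAut.conj w).toMonoidHom =
        sInf {G : Subgroup W |
          (∃ (x : W) (K : Set B),
            G = (Subgroup.closure (cs.simple '' K)).map (MulAut.conj x).toMonoidHom) ∧
          A ⊆ (G : Set W)} := by
  classical
  have hex : ∃ n, ∃ (w : W) (J : Set B), J.ncard = n ∧
      A ⊆ ((Subgroup.closure (cs.simple '' J)).map (MulAut.conj w).toMonoidHom : Set W) := by
    refine ⟨_, 1, Set.univ, rfl, fun a _ => ?_⟩
    rw [SetLike.mem_coe, mem_conj_iff, Set.image_univ, cs.subgroup_closure_range_simple]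
    trivial
  obtain ⟨w, J, hcard, hA⟩ := Nat.find_spec hex
  have hmin : ∀ (x : W) (K : Set B),
      A ⊆ ((Subgroup.closure (cs.simple '' K)).map (MulAut.conj x).toMonoidHom : Set W) →
      J.ncard ≤ K.ncard := fun x K h => by
    rw [hcard]
    exact Nat.find_min' hex ⟨x, K, rfl, h⟩
  refine ⟨w, J, hA, hmin, le_antisymm (le_sInf ?_) (sInf_le ⟨⟨w, J, rfl⟩, hA⟩)⟩
  rintro _ ⟨⟨x, K, rfl⟩, hAK⟩
  obtain ⟨u, hu, J', hJ', hiff⟩ := exists_special_inter cs K J (x⁻¹ * w)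
  have hsub : A ⊆ ((Subgroup.closure (cs.simple '' J')).map
      (MulAut.conj (w * u)).toMonoidHom : Set W) := by
    intro a ha
    have h1 := (mem_conj_iff _ _ _).1 (hA ha)
    have h2 := (mem_conj_iff _ _ _).1 (hAK ha)
    refine (mem_conj_iff _ _ _).2 ?_
    have := (hiff (w⁻¹ * a * w)).1 ⟨h1, by simpa [mul_assoc] using h2⟩
    simpa [mul_assoc] using this
  obtain rfl : J' = J := Set.eq_of_subset_of_ncard_le hJ' (hmin _ _ hsub) (Set.toFinite _)
  intro a ha
  rw [mem_conj_iff] at ha ⊢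
  have := ((hiff (w⁻¹ * a * w)).2 (mul_mem (mul_mem (inv_mem hu) ha) hu)).2
  simpa [mul_assoc] using this
end
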